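/- arXiv:2602.22081 — 5 statements merged into one kernel-verified Lean document; each statement's English description precedes it below -/
import Mathlib

section
/- Let M, L, w be positive integers with M < w and w ≥ 2. If every prime factor of L is at least 2w - 1, then every MC-CAC of length L and weight w in M channels has at most M(M-1)L/((2w-M)(w-1)) + M(L-1)/(2w-2) codewords. -/
/-- The set of time slots used by codeword `S` on channel `i`. -/
def chan {M L : ℕ} (S : Finset (Fin M × ZMod L)) (i : Fin M) : Finset (ZMod L) :=
  (S.filter fun p => p.1 = i).image Prod.snd

/-- The `(i,j)` set of differences of a codeword `S ⊆ {1,…,M} × Z_L`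
(with `0` removed when `i = j`). -/
def Darr {M L : ℕ} (S : Finset (Fin M × ZMod L)) (i j : Fin M) : Finset (ZMod L) :=
  if i = j then (((chan S i) ×ˢ (chan S j)).image fun p => p.1 - p.2).erase 0
  else ((chan S i) ×ˢ (chan S j)).image fun p => p.1 - p.2

/-- A multichannel conflict-avoiding code of length `L` and weight `w` in `M` channels. -/
def IsMCCAC (M L w : ℕ) (C : Finset (Finset (Fin M × ZMod L))) : Prop :=
  (∀ S ∈ C, S.card = w) ∧
  ∀ S ∈ C, ∀ S' ∈ C, S ≠ S' → ∀ i j : Fin M, Disjoint (Darr S i j) (Darr S' i j)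

lemma cd_aux {L w : ℕ} (hL : 0 < L)
    (hprime : ∀ p : ℕ, p.Prime → p ∣ L → 2 * w - 1 ≤ p)
    (A B : Finset (ZMod L)) (hA : A.Nonempty) (hB : B.Nonempty)
    (hAw : A.card ≤ w) (hBw : B.card ≤ w) :
    A.card + B.card - 1 ≤ ((A ×ˢ B).image fun p => p.1 - p.2).card := by
  have hne : ((A ×ˢ B).image fun p => p.1 - p.2).Nonempty := (hA.product hB).image _
  by_cases h1 : L = 1
  · subst h1
    have ha : A.card ≤ 1 := Finset.card_le_one_of_subsingleton A
    have hb : B.card ≤ 1 := Finset.card_le_one_of_subsingleton B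
    have := hne.card_pos
    omega
  · have key := cauchy_davenport_minOrder_add (s := A) (t := B.image (fun x => -x)) hA (hB.image _)
    have hc : (B.image (fun x => -x)).card = B.card :=
      Finset.card_image_of_injective _ neg_injective
    rw [ZMod.minOrder hL.ne' h1, hc] at key
    have key2 : min L.minFac (A.card + B.card - 1) ≤
        (Finset.image₂ (fun a b => a + b) A (B.image (fun x => -x))).card := by
      rw [min_le_iff] at key ⊢
      exact key.imp (fun h => Nat.cast_le.1 h) (fun h => Nat.cast_le.1 h)
    have he : Finset.image₂ (fun a b => a + b) A (B.image (fun x => -x))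
        = (A ×ˢ B).image fun p => p.1 - p.2 := by
      ext x
      simp [Finset.mem_image₂, sub_eq_add_neg, and_assoc]
    rw [he] at key2
    have := hprime _ (Nat.minFac_prime h1) (Nat.minFac_dvd L)
    omega

lemma chan_card_sum {M L : ℕ} (S : Finset (Fin M × ZMod L)) :
    ∑ i, (chan S i).card = S.card := by
  rw [Finset.card_eq_sum_card_fiberwise (f := Prod.fst) (t := Finset.univ) (by simp)]
  refine Finset.sum_congr rfl fun i _ => ?_
  unfold chan
  refine Finset.card_image_of_injOn ?_
  rintro ⟨a, b⟩ h ⟨c, d⟩ h' h2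
  simp at h h' h2
  simp [h.2, h'.2, h2]

lemma code_aux {M L w : ℕ} (hL : 0 < L) (hw : 2 ≤ w) (hMw : M < w)
    (hprime : ∀ p : ℕ, p.Prime → p ∣ L → 2 * w - 1 ≤ p)
    (S : Finset (Fin M × ZMod L)) (hS : S.card = w) :
    (2 * (w : ℝ) - M) * (2 * w - 2) ≤
      2 * (∑ i, ∑ j, if i = j then 0 else ((Darr S i j).card : ℝ))
      + (2 * (w : ℝ) - M) * ∑ i, ((Darr S i i).card : ℝ) := by
  have hsum := chan_card_sum S
  rw [hS] at hsum
  have hle : ∀ i, (chan S i).card ≤ w := fun i => by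
    rw [← hsum]
    exact Finset.single_le_sum (f := fun i => (chan S i).card) (fun _ _ => Nat.zero_le _)
      (Finset.mem_univ i)
  set a : Fin M → ℝ := fun i => ((chan S i).card : ℝ) with ha
  set K : Finset (Fin M) := Finset.univ.filter fun i => (chan S i).Nonempty with hK
  have hKa : ∑ i ∈ K, a i = w := by
    rw [← hsum, hK, Finset.sum_filter]
    push_cast
    refine Finset.sum_congr rfl fun i _ => ?_
    by_cases h : (chan S i).Nonempty
    · simp [h, ha]
    · simp [h, Finset.not_nonempty_iff_eq_empty.1 h]
  have hKM : (K.card : ℝ) ≤ M := by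
    have := Finset.card_le_univ K
    rw [Fintype.card_fin] at this
    exact_mod_cast this
  have hK1 : (1 : ℝ) ≤ K.card := by
    have : K.Nonempty := by
      by_contra h
      rw [Finset.not_nonempty_iff_eq_empty] at h
      rw [h, Finset.sum_empty] at hKa
      have hw' : (2 : ℝ) ≤ w := by exact_mod_cast hw
      linarith
    exact_mod_cast this.card_pos
  have hd : ∀ i ∈ K, 2 * a i - 2 ≤ ((Darr S i i).card : ℝ) := by
    intro i hi
    have hi' := (Finset.mem_filter.1 hi).2
    have h := cd_aux hL hprime _ _ hi' hi' (hle i) (hle i)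
    have h2 := Finset.pred_card_le_card_erase
      (s := ((chan S i ×ˢ chan S i).image fun p => p.1 - p.2)) (a := 0)
    have h3 : 2 * (chan S i).card ≤ (Darr S i i).card + 2 := by
      simp only [Darr, if_true]
      omega
    have h4 : 2 * a i ≤ ((Darr S i i).card : ℝ) + 2 := by simp only [ha]; exact_mod_cast h3
    linarith
  have ho : ∀ i ∈ K, ∀ j ∈ K, a i + a j - 1 - (if i = j then 2 * a i - 1 else 0) ≤
      if i = j then 0 else ((Darr S i j).card : ℝ) := by
    intro i hi j hj
    by_cases hij : i = j
    · subst hij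
      simp
      linarith
    · have h := cd_aux hL hprime _ _ (Finset.mem_filter.1 hi).2 (Finset.mem_filter.1 hj).2
        (hle i) (hle j)
      have h3 : (chan S i).card + (chan S j).card ≤ (Darr S i j).card + 1 := by
        simp only [Darr, hij, if_false]
        omega
      have h4 : a i + a j ≤ ((Darr S i j).card : ℝ) + 1 := by simp only [ha]; exact_mod_cast h3
      simp only [hij, if_false]
      linarith
  have hD : 2 * (w : ℝ) - 2 * K.card ≤ ∑ i, ((Darr S i i).card : ℝ) := by
    calc 2 * (w : ℝ) - 2 * K.card = ∑ i ∈ K, (2 * a i - 2) := by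
          rw [Finset.sum_sub_distrib, ← Finset.mul_sum, hKa]; simp; ring
      _ ≤ ∑ i ∈ K, ((Darr S i i).card : ℝ) := Finset.sum_le_sum hd
      _ ≤ _ := Finset.sum_le_sum_of_subset_of_nonneg (Finset.subset_univ _)
          (fun _ _ _ => Nat.cast_nonneg _)
  have hO : ((K.card : ℝ) - 1) * (2 * w - K.card) ≤
      ∑ i, ∑ j, if i = j then 0 else ((Darr S i j).card : ℝ) := by
    have hnn : ∀ i j, (0 : ℝ) ≤ if i = j then 0 else ((Darr S i j).card : ℝ) := by
      intro i j
      split_ifs <;> positivity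
    calc ((K.card : ℝ) - 1) * (2 * w - K.card)
        = ∑ i ∈ K, ∑ j ∈ K, (a i + a j - 1 - (if i = j then 2 * a i - 1 else 0)) := by
          have : ∀ i ∈ K, ∑ j ∈ K, (a i + a j - 1 - (if i = j then 2 * a i - 1 else 0))
              = K.card * a i + w - K.card - (2 * a i - 1) := by
            intro i hi
            simp only [Finset.sum_sub_distrib, Finset.sum_add_distrib, hKa, Finset.sum_ite_eq, hi,
              if_true, Finset.sum_const, nsmul_eq_mul, mul_one]
          rw [Finset.sum_congr rfl this]
          simp only [Finset.sum_sub_distrib, Finset.sum_add_distrib, ← Finset.mul_sum, hKa,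
            Finset.sum_const, nsmul_eq_mul, mul_one]
          ring
      _ ≤ ∑ i ∈ K, ∑ j ∈ K, (if i = j then 0 else ((Darr S i j).card : ℝ)) :=
          Finset.sum_le_sum fun i hi => Finset.sum_le_sum fun j hj => ho i hi j hj
      _ ≤ ∑ i ∈ K, ∑ j, (if i = j then 0 else ((Darr S i j).card : ℝ)) :=
          Finset.sum_le_sum fun i hi => Finset.sum_le_sum_of_subset_of_nonneg
            (Finset.subset_univ _) (fun j _ _ => hnn i j)
      _ ≤ _ := Finset.sum_le_sum_of_subset_of_nonneg (Finset.subset_univ _)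
          (fun i _ _ => Finset.sum_nonneg fun j _ => hnn i j)
  have hMw' : (M : ℝ) < w := by exact_mod_cast hMw
  have hpos : (0 : ℝ) ≤ 2 * w - M := by
    have : (0 : ℝ) ≤ w := Nat.cast_nonneg _
    linarith
  have e1 := mul_le_mul_of_nonneg_left hD hpos
  have e2 := mul_nonneg (sub_nonneg.2 hK1) (sub_nonneg.2 hKM)
  nlinarith

lemma total_aux {M L w : ℕ} [NeZero L] (C : Finset (Finset (Fin M × ZMod L)))
    (hC : IsMCCAC M L w C) (i j : Fin M) :
    ∑ S ∈ C, ((Darr S i j).card : ℝ) ≤ if i = j then (L : ℝ) - 1 else L := by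
  have h1 : ∑ S ∈ C, (Darr S i j).card = (C.biUnion fun S => Darr S i j).card :=
    (Finset.card_biUnion fun S hS S' hS' h => hC.2 S hS S' hS' h i j).symm
  have h2 : ∑ S ∈ C, ((Darr S i j).card : ℝ) = ((C.biUnion fun S => Darr S i j).card : ℝ) := by
    exact_mod_cast h1
  rw [h2]
  split_ifs with h
  · subst h
    have : (C.biUnion fun S => Darr S i i) ⊆ Finset.univ.erase 0 := by
      intro x hx
      obtain ⟨S, _, hx⟩ := Finset.mem_biUnion.1 hx
      simp only [Darr, if_true] at hx
      exact Finset.mem_erase.2 ⟨(Finset.mem_erase.1 hx).1, Finset.mem_univ _⟩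
    have := Finset.card_le_card this
    rw [Finset.card_erase_of_mem (Finset.mem_univ _), Finset.card_univ, ZMod.card] at this
    have hL := NeZero.pos L
    have h3 : (C.biUnion fun S => Darr S i i).card + 1 ≤ L := by omega
    have : ((C.biUnion fun S => Darr S i i).card : ℝ) + 1 ≤ L := by exact_mod_cast h3
    linarith
  · have := Finset.card_le_univ (C.biUnion fun S => Darr S i j)
    rw [ZMod.card] at this
    exact_mod_cast this

theorem stmt_0 (M L w : ℕ) (hM : 0 < M) (hL : 0 < L) (hw : 2 ≤ w) (hMw : M < w)
    (hprime : ∀ p : ℕ, p.Prime → p ∣ L → 2 * w - 1 ≤ p)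
    (C : Finset (Finset (Fin M × ZMod L))) (hC : IsMCCAC M L w C) :
    (C.card : ℝ) ≤
      (M : ℝ) * ((M : ℝ) - 1) * (L : ℝ) / ((2 * (w : ℝ) - (M : ℝ)) * ((w : ℝ) - 1))
      + (M : ℝ) * ((L : ℝ) - 1) / (2 * (w : ℝ) - 2) := by
  haveI : NeZero L := ⟨hL.ne'⟩
  have hMw' : (M : ℝ) < w := by exact_mod_cast hMw
  have hw' : (2 : ℝ) ≤ w := by exact_mod_cast hw
  have hp1 : (0 : ℝ) < 2 * w - M := by linarith
  have hp2 : (0 : ℝ) < w - 1 := by linarith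
  have hsum := Finset.sum_le_sum fun S hS => code_aux hL hw hMw hprime S (hC.1 S hS)
  have hO : ∑ S ∈ C, (∑ i, ∑ j, if i = j then 0 else ((Darr S i j).card : ℝ))
      ≤ M * (M - 1) * L := by
    rw [Finset.sum_comm]
    calc _ ≤ ∑ i : Fin M, ∑ j : Fin M, ((L : ℝ) - if i = j then (L : ℝ) else 0) := by
          refine Finset.sum_le_sum fun i _ => ?_
          rw [Finset.sum_comm]
          refine Finset.sum_le_sum fun j _ => ?_
          have := total_aux C hC i j
          by_cases h : i = j
          · simp [h]
          · simpa [h] using this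
      _ = _ := by
          simp [Finset.sum_sub_distrib]
          ring
  have hD : ∑ S ∈ C, (∑ i, ((Darr S i i).card : ℝ)) ≤ M * (L - 1) := by
    rw [Finset.sum_comm]
    calc _ ≤ ∑ i : Fin M, ((L : ℝ) - 1) := by
          refine Finset.sum_le_sum fun i _ => ?_
          simpa using total_aux C hC i i
      _ = _ := by simp [mul_sub]
  rw [Finset.sum_const, nsmul_eq_mul, Finset.sum_add_distrib, ← Finset.mul_sum,
    ← Finset.mul_sum] at hsum
  have hD' := mul_le_mul_of_nonneg_left hD hp1.le
  have hfin : (C.card : ℝ) * ((2 * (w : ℝ) - M) * (2 * w - 2)) ≤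
      2 * (M * (M - 1) * L) + (2 * w - M) * (M * (L - 1)) := by linarith
  have hp3 : (0 : ℝ) < (2 * (w : ℝ) - M) * (2 * w - 2) := mul_pos hp1 (by linarith)
  have he : (M : ℝ) * ((M : ℝ) - 1) * (L : ℝ) / ((2 * (w : ℝ) - (M : ℝ)) * ((w : ℝ) - 1))
      + (M : ℝ) * ((L : ℝ) - 1) / (2 * (w : ℝ) - 2)
      = (2 * (M * (M - 1) * L) + (2 * w - M) * (M * (L - 1))) /
        ((2 * (w : ℝ) - M) * (2 * w - 2)) := by
    have h2 : 2 * (w : ℝ) - 2 = 2 * (w - 1) := by ring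
    rw [h2]
    have := hp1.ne'
    have := hp2.ne'
    field_simp
  rw [he, le_div_iff₀ hp3]
  exact hfin
end

section
/- Let w ≥ 2 be an integer and let p_1 < p_2 < ... < p_n be primes with p_1 ≥ w. Suppose that for each i = 1, ..., n the Legendre symbol conditions hold: (-1/p_i) = -1, and (j/p_i)·((j-w+1)/p_i) = -1 for every j = 1, 2, ..., w-2. Then for any positive integers r_1, ..., r_n there exists an equi-difference CAC of length (w-1)·p_1^{r_1}···p_n^{r_n} and weight w having (p_1^{r_1}···p_n^{r_n} - 1)/2 codewords. -/
/-- The set of nonzero differences of a subset `S ⊆ Z_L`. -/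
def dstar {L : ℕ} (S : Finset (ZMod L)) : Finset (ZMod L) :=
  ((S ×ˢ S).image fun p => p.1 - p.2).erase 0

/-- A conflict-avoiding code of length `L` and weight `w`. -/
def IsCAC (L w : ℕ) (C : Finset (Finset (ZMod L))) : Prop :=
  (∀ S ∈ C, S.card = w) ∧
  ∀ S ∈ C, ∀ S' ∈ C, S ≠ S' → Disjoint (dstar S) (dstar S')

/-- A codeword is equi-difference if it is of the form `{0, g, 2g, …, (w-1)g}`. -/
def IsEquiDiff {L : ℕ} (w : ℕ) (S : Finset (ZMod L)) : Prop :=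
  ∃ g : ZMod L, S = (Finset.range w).image fun j : ℕ => (j : ZMod L) * g

theorem core_lemma (M N : ℕ) (hM : 1 ≤ M) (hN : 0 < N)
    (hco : ∀ j : ℤ, j ≠ 0 → |j| ≤ M → IsCoprime (N : ℤ) j)
    (f : ℤ → ℤ) (f0 : ∀ x, (N : ℤ) ∣ x → f x = 0)
    (fper : ∀ x y : ℤ, (N : ℤ) ∣ x - y → f x = f y)
    (f1 : ∀ x, ¬ (N : ℤ) ∣ x → f x = 1 ∨ f x = -1)
    (fneg : ∀ x, f (-x) = - f x)
    (f4 : ∀ x y j : ℤ, f x = 1 → f y = 1 → 1 ≤ j → j ≤ M - 1 →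
      ¬ (N : ℤ) ∣ j * x - (j - M) * y) :
    ∃ C : Finset (Finset (ZMod (M * N))),
      IsCAC (M * N) (M + 1) C ∧ (∀ S ∈ C, IsEquiDiff (M + 1) S) ∧
      C.card = (N - 1) / 2 := by
  classical
  have hMZ : (1 : ℤ) ≤ M := by exact_mod_cast hM
  obtain ⟨b, a, hab⟩ := hco M (by omega) (by rw [abs_of_nonneg] <;> omega)
  -- b * N + a * M = 1
  let G : ℤ → ℤ := fun x => x * (a * M) + b * N
  have hGM : ∀ s t x y : ℤ, (M : ℤ) ∣ s * G x - t * G y → (M : ℤ) ∣ s - t := by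
    intro s t x y h
    have : s - t = (s * G x - t * G y) + M * (a * (s - t) - s * x * a + t * y * a) := by
      simp only [G]; linear_combination (-(s - t)) * hab
    rw [this]
    exact dvd_add h (dvd_mul_right _ _)
  have hGN : ∀ s t x y : ℤ, (N : ℤ) ∣ s * G x - t * G y → (N : ℤ) ∣ s * x - t * y := by
    intro s t x y h
    have : s * x - t * y = (s * G x - t * G y) + N * (b * (s * x - t * y) - (s - t) * b) := by
      simp only [G]; linear_combination (-(s * x - t * y)) * hab
    rw [this]
    exact dvd_add h (dvd_mul_right _ _)
  let S : ℤ → Finset (ZMod (M * N)) := fun x =>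
    (Finset.range (M + 1)).image fun j : ℕ => (j : ZMod (M * N)) * ((G x : ℤ) : ZMod (M * N))
  let X : Finset ℤ := (Finset.Ico (1 : ℤ) N).filter (fun x => f x = 1)
  let Y : Finset ℤ := (Finset.Ico (1 : ℤ) N).filter (fun x => ¬ f x = 1)
  have hX : ∀ x ∈ X, 1 ≤ x ∧ x < N ∧ f x = 1 := by
    intro x hx; simp only [X, Finset.mem_filter, Finset.mem_Ico] at hx; tauto
  have hnd : ∀ x : ℤ, f x = 1 → ¬ (N : ℤ) ∣ x := by
    intro x hx h; have := f0 x h; omega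
  have hkey : ∀ s t x y : ℤ, ((s : ℤ) : ZMod (M * N)) * (G x : ℤ) = ((t : ℤ) : ZMod (M * N)) * (G y : ℤ) →
      (M : ℤ) ∣ s - t ∧ (N : ℤ) ∣ s * x - t * y := by
    intro s t x y h
    have h2 : (((s * G x - t * G y : ℤ)) : ZMod (M * N)) = 0 := by
      push_cast; rw [h]; ring
    rw [ZMod.intCast_zmod_eq_zero_iff_dvd] at h2
    push_cast at h2
    exact ⟨hGM s t x y ((dvd_mul_right _ _).trans h2), hGN s t x y ((dvd_mul_left _ _).trans h2)⟩
  have hcard : ∀ x, f x = 1 → (S x).card = M + 1 := by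
    intro x hx
    simp only [S]
    rw [Finset.card_image_of_injOn, Finset.card_range]
    intro i hi j hj hij
    simp only [Finset.coe_range, Set.mem_Iio] at hi hj
    have := (hkey i j x x (by push_cast; exact hij)).2
    by_contra hne
    rw [← sub_mul] at this
    have hc := hco ((i : ℤ) - j) (by omega) (by rw [abs_le]; omega)
    exact hnd x hx (hc.dvd_of_dvd_mul_left this)
  have hmem : ∀ x d, d ∈ dstar (S x) → ∃ s : ℤ, s ≠ 0 ∧ |s| ≤ M ∧ d = ((s : ℤ) : ZMod (M * N)) * (G x : ℤ) := by
    intro x d hd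
    simp only [dstar, S, Finset.mem_erase, Finset.mem_image, Finset.mem_product, Finset.mem_range,
      Prod.exists] at hd
    obtain ⟨hd0, u, v, ⟨⟨i, hi, rfl⟩, ⟨j, hj, rfl⟩⟩, rfl⟩ := hd
    refine ⟨(i : ℤ) - j, ?_, by rw [abs_le]; omega, by push_cast; ring⟩
    intro h
    apply hd0
    have : i = j := by omega
    rw [this]; ring
  have hdisj : ∀ x ∈ X, ∀ y ∈ X, x ≠ y → Disjoint (dstar (S x)) (dstar (S y)) := by
    intro x hx y hy hxy
    obtain ⟨hx1, hx2, hx3⟩ := hX x hx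
    obtain ⟨hy1, hy2, hy3⟩ := hX y hy
    rw [Finset.disjoint_left]
    intro d hd1 hd2
    obtain ⟨s, hs0, hsM, hs⟩ := hmem x d hd1
    obtain ⟨t, ht0, htM, ht⟩ := hmem y d hd2
    obtain ⟨⟨k, hk⟩, h2⟩ := hkey s t x y (hs.symm.trans ht)
    rw [abs_le] at hsM htM
    have hk1 : k ≤ 2 := by nlinarith
    have hk2 : -2 ≤ k := by nlinarith
    have hcs := hco s hs0 (by rw [abs_le]; omega)
    have hne : ∀ u v : ℤ, f u = 1 → f v = 1 → ¬ (N : ℤ) ∣ u + v := by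
      intro u v hu hv h
      have h3 := fper u (-v) (by simpa using h)
      rw [fneg] at h3; omega
    interval_cases k
    · have : t = -s := by omega
      subst this
      rw [show s * x - -s * y = s * (x + y) by ring] at h2
      exact hne x y hx3 hy3 (hcs.dvd_of_dvd_mul_left h2)
    · refine f4 y x t hy3 hx3 (by omega) (by omega) ?_
      have : s = t - M := by omega
      rw [← this, ← neg_sub, dvd_neg]; exact h2
    · have : t = s := by omega
      subst this
      rw [← mul_sub] at h2
      have h3 := hcs.dvd_of_dvd_mul_left h2
      have := Int.eq_zero_of_abs_lt_dvd h3 (by rw [abs_lt]; omega)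
      omega
    · refine f4 x y s hx3 hy3 (by omega) (by omega) ?_
      have : t = s - M := by omega
      rw [← this]; exact h2
    · have : t = -s := by omega
      subst this
      rw [show s * x - -s * y = s * (x + y) by ring] at h2
      exact hne x y hx3 hy3 (hcs.dvd_of_dvd_mul_left h2)
  have hne : ∀ x ∈ X, (dstar (S x)).Nonempty := by
    intro x hx
    obtain ⟨hx1, hx2, hx3⟩ := hX x hx
    have h1 : 1 < (S x).card := by rw [hcard x hx3]; omega
    obtain ⟨u, hu, v, hv, huv⟩ := Finset.one_lt_card.1 h1
    refine ⟨u - v, ?_⟩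
    simp only [dstar, Finset.mem_erase, Finset.mem_image, Finset.mem_product]
    exact ⟨sub_ne_zero.2 huv, (u, v), ⟨hu, hv⟩, rfl⟩
  have hinj : Set.InjOn S X := by
    intro x hx y hy hxy
    by_contra hn
    have h := hdisj x hx y hy hn
    rw [← hxy, disjoint_self] at h
    have h2 := hne x hx
    rw [h] at h2
    exact absurd h2 (by simp)
  have hXY : X.card + Y.card = N - 1 := by
    have := Finset.card_filter_add_card_filter_not (s := Finset.Ico (1 : ℤ) N) (fun x => f x = 1)
    simp only [X, Y]
    rw [this, Int.card_Ico]; omega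
  have hXYe : X.card = Y.card := by
    have hndI : ∀ x : ℤ, 1 ≤ x → x < N → ¬ (N : ℤ) ∣ x := by
      intro x h1 h2 h
      have := Int.le_of_dvd (by omega) h
      omega
    have hrefl : ∀ x : ℤ, f (N - x) = - f x := by
      intro x
      rw [← fneg]
      apply fper
      exact ⟨1, by ring⟩
    apply Finset.card_bij (fun x _ => (N : ℤ) - x)
    · intro x hx
      obtain ⟨hx1, hx2, hx3⟩ := hX x hx
      simp only [Y, Finset.mem_filter, Finset.mem_Ico]
      rw [hrefl]
      omega
    · intro x _ y _ h; omega
    · intro y hy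
      simp only [Y, Finset.mem_filter, Finset.mem_Ico] at hy
      refine ⟨N - y, ?_, by ring⟩
      simp only [X, Finset.mem_filter, Finset.mem_Ico]
      rw [hrefl]
      have := f1 y (hndI y hy.1.1 hy.1.2)
      omega
  refine ⟨X.image S, ⟨?_, ?_⟩, ?_, ?_⟩
  · intro T hT
    obtain ⟨x, hx, rfl⟩ := Finset.mem_image.1 hT
    exact hcard x (hX x hx).2.2
  · intro T hT T' hT' hTT
    obtain ⟨x, hx, rfl⟩ := Finset.mem_image.1 hT
    obtain ⟨y, hy, rfl⟩ := Finset.mem_image.1 hT'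
    exact hdisj x hx y hy (fun h => hTT (by rw [h]))
  · intro T hT
    obtain ⟨x, hx, rfl⟩ := Finset.mem_image.1 hT
    exact ⟨_, rfl⟩
  · rw [Finset.card_image_of_injOn hinj]; omega

/-- The Legendre symbol of the prime-to-`p` part. -/
noncomputable def gfun (p : ℕ) (hp : p.Prime) (x : ℤ) : ℤ :=
  @legendreSym p ⟨hp⟩ (x / (p : ℤ) ^ multiplicity (p : ℤ) x)

theorem gfun_eq (p : ℕ) (hp : p.Prime) (v : ℕ) (u : ℤ) (hu : ¬ (p : ℤ) ∣ u) :
    gfun p hp ((p : ℤ) ^ v * u) = @legendreSym p ⟨hp⟩ u := by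
  have hp0 : (p : ℤ) ≠ 0 := by exact_mod_cast hp.ne_zero
  have : multiplicity (p : ℤ) ((p : ℤ) ^ v * u) = v := by
    apply multiplicity_eq_of_dvd_of_not_dvd (dvd_mul_right _ _)
    rw [pow_succ, mul_dvd_mul_iff_left (pow_ne_zero _ hp0)]
    exact hu
  unfold gfun
  rw [this, Int.mul_ediv_cancel_left _ (pow_ne_zero _ hp0)]

theorem exists_form (p : ℕ) (hp : p.Prime) (r : ℕ) (x : ℤ) (hx : ¬ (p : ℤ) ^ r ∣ x) :
    ∃ v u, v < r ∧ ¬ (p : ℤ) ∣ u ∧ x = (p : ℤ) ^ v * u := by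
  have hx0 : x ≠ 0 := by rintro rfl; simp at hx
  have hfin : FiniteMultiplicity (p : ℤ) x := by
    rw [Int.finiteMultiplicity_iff]
    exact ⟨by simpa using hp.ne_one, hx0⟩
  obtain ⟨u, hu, hnu⟩ := hfin.exists_eq_pow_mul_and_not_dvd
  refine ⟨_, u, ?_, hnu, hu⟩
  by_contra h
  apply hx
  rw [hu]
  exact (pow_dvd_pow _ (by omega)).mul_right _

theorem gfun_per (p : ℕ) (hp : p.Prime) (r : ℕ) (x y : ℤ) (hx : ¬ (p : ℤ) ^ r ∣ x)
    (h : (p : ℤ) ^ r ∣ x - y) : gfun p hp x = gfun p hp y := by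
  obtain ⟨v, u, hv, hu, rfl⟩ := exists_form p hp r x hx
  obtain ⟨k, hk⟩ := h
  obtain ⟨d, rfl⟩ : ∃ d, r = v + 1 + d := ⟨r - (v + 1), by omega⟩
  have hy : y = (p : ℤ) ^ v * (u - p * (p ^ d * k)) := by
    rw [pow_add, pow_succ] at hk
    linear_combination -hk
  rw [hy, gfun_eq p hp v u hu, gfun_eq]
  · have : Fact p.Prime := ⟨hp⟩
    rw [legendreSym.mod p u, legendreSym.mod p (u - _)]
    congr 1
    exact (Int.sub_mul_emod_self_left _ _ _).symm
  · rwa [dvd_sub_left (dvd_mul_right _ _)]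

theorem gfun_mul (p : ℕ) (hp : p.Prime) (a x : ℤ) (ha : ¬ (p : ℤ) ∣ a) (hx : x ≠ 0) :
    gfun p hp (a * x) = @legendreSym p ⟨hp⟩ a * gfun p hp x := by
  have hpi : Prime (p : ℤ) := Nat.prime_iff_prime_int.1 hp
  have : ∃ r, ¬ (p : ℤ) ^ r ∣ x := by
    have hfin : FiniteMultiplicity (p : ℤ) x := by
      rw [Int.finiteMultiplicity_iff]
      exact ⟨by simpa using hp.ne_one, hx⟩
    obtain ⟨n, hn⟩ := hfin
    exact ⟨_, hn⟩
  obtain ⟨r, hr⟩ := this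
  obtain ⟨v, u, hv, hu, rfl⟩ := exists_form p hp r x hr
  rw [mul_left_comm, gfun_eq p hp v u hu, gfun_eq]
  · exact @legendreSym.mul p ⟨hp⟩ a u
  · intro h; exact (hpi.dvd_or_dvd h).elim ha hu

theorem gfun_pm (p : ℕ) (hp : p.Prime) (x : ℤ) (r : ℕ) (hx : ¬ (p : ℤ) ^ r ∣ x) :
    gfun p hp x = 1 ∨ gfun p hp x = -1 := by
  obtain ⟨v, u, hv, hu, rfl⟩ := exists_form p hp r x hx
  rw [gfun_eq p hp v u hu]
  have : Fact p.Prime := ⟨hp⟩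
  apply legendreSym.eq_one_or_neg_one
  rwa [Ne, ZMod.intCast_zmod_eq_zero_iff_dvd]

open Classical in
/-- The sign function on the integers. -/
noncomputable def ffun {n : ℕ} (p : Fin n → ℕ) (hp : ∀ i, (p i).Prime) (r : Fin n → ℕ) (x : ℤ) : ℤ :=
  if h : ∃ i, ¬ (p i : ℤ) ^ r i ∣ x then gfun (p h.choose) (hp _) x else 0

theorem ffun_key {n : ℕ} (p : Fin n → ℕ) (hp : ∀ i, (p i).Prime) (r : Fin n → ℕ) (x y : ℤ)
    (h : ∀ i, (p i : ℤ) ^ r i ∣ x ↔ (p i : ℤ) ^ r i ∣ y) :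
    ((∀ i, (p i : ℤ) ^ r i ∣ x) ∧ ffun p hp r x = 0 ∧ ffun p hp r y = 0) ∨
    ∃ i, ¬ (p i : ℤ) ^ r i ∣ x ∧ ffun p hp r x = gfun (p i) (hp i) x ∧
      ffun p hp r y = gfun (p i) (hp i) y := by
  by_cases hx : ∃ i, ¬ (p i : ℤ) ^ r i ∣ x
  · right
    have hy : ∃ i, ¬ (p i : ℤ) ^ r i ∣ y := by simpa only [h] using hx
    refine ⟨hx.choose, hx.choose_spec, ?_, ?_⟩
    · unfold ffun; rw [dif_pos hx]
    · unfold ffun; rw [dif_pos hy]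
      have : hy.choose = hx.choose := by simp only [h]
      congr 1
      rw [this]
  · left
    have hy : ¬ ∃ i, ¬ (p i : ℤ) ^ r i ∣ y := by simpa only [h] using hx
    refine ⟨by simpa using hx, ?_, ?_⟩
    · unfold ffun; rw [dif_neg hx]
    · unfold ffun; rw [dif_neg hy]

theorem stmt_2 (w n : ℕ) (hw : 2 ≤ w) (p : Fin n → ℕ) (hp : ∀ i, (p i).Prime)
    (hmono : StrictMono p) (hpw : ∀ i, w ≤ p i)
    (hQ1 : ∀ i, @legendreSym (p i) ⟨hp i⟩ (-1) = -1)
    (hQ2 : ∀ i, ∀ j : ℕ, 1 ≤ j → j ≤ w - 2 →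
      @legendreSym (p i) ⟨hp i⟩ (j : ℤ) * @legendreSym (p i) ⟨hp i⟩ ((j : ℤ) - w + 1) = -1)
    (r : Fin n → ℕ) (hr : ∀ i, 0 < r i) :
    ∃ C : Finset (Finset (ZMod ((w - 1) * ∏ i, p i ^ r i))),
      IsCAC ((w - 1) * ∏ i, p i ^ r i) w C ∧ (∀ S ∈ C, IsEquiDiff w S) ∧
      C.card = ((∏ i, p i ^ r i) - 1) / 2 := by
  obtain ⟨M, rfl⟩ : ∃ M, w = M + 1 := ⟨w - 1, by omega⟩
  change ∃ C : Finset (Finset (ZMod (M * ∏ i, p i ^ r i))),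
      IsCAC (M * ∏ i, p i ^ r i) (M + 1) C ∧ (∀ S ∈ C, IsEquiDiff (M + 1) S) ∧
      C.card = ((∏ i, p i ^ r i) - 1) / 2
  have hnd : ∀ i, ∀ j : ℤ, j ≠ 0 → |j| ≤ M → ¬ (p i : ℤ) ∣ j := by
    intro i j hj hjM h
    have h1 := hpw i
    exact hj (Int.eq_zero_of_abs_lt_dvd h (by omega))
  have hpc : ∀ i, ∀ j : ℤ, j ≠ 0 → |j| ≤ M → IsCoprime ((p i : ℤ) ^ r i) j := by
    intro i j hj hjM
    apply IsCoprime.pow_left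
    rw [Prime.coprime_iff_not_dvd (Nat.prime_iff_prime_int.1 (hp i))]
    exact hnd i j hj hjM
  have hcast : ((∏ i, p i ^ r i : ℕ) : ℤ) = ∏ i, (p i : ℤ) ^ r i := by push_cast; rfl
  have hNd : ∀ x : ℤ, ((∏ i, p i ^ r i : ℕ) : ℤ) ∣ x ↔ ∀ i, (p i : ℤ) ^ r i ∣ x := by
    intro x
    rw [hcast]
    constructor
    · intro h i
      exact (Finset.dvd_prod_of_mem _ (Finset.mem_univ i)).trans h
    · intro h
      apply Finset.prod_dvd_of_coprime _ (fun i _ => h i)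
      intro i _ j _ hij
      apply IsCoprime.pow
      rw [Nat.isCoprime_iff_coprime, Nat.coprime_primes (hp i) (hp j)]
      exact fun h => hij (hmono.injective h)
  have hmulI : ∀ i, ∀ j x : ℤ, j ≠ 0 → |j| ≤ M → ((p i : ℤ) ^ r i ∣ j * x ↔ (p i : ℤ) ^ r i ∣ x) := by
    intro i j x hj hjM
    exact ⟨fun h => (hpc i j hj hjM).dvd_of_dvd_mul_left h, fun h => h.mul_left _⟩
  have hne0 : ∀ i, ∀ x : ℤ, ¬ (p i : ℤ) ^ r i ∣ x → x ≠ 0 := by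
    rintro i x h rfl; simp at h
  apply core_lemma M _ (by omega) (Finset.prod_pos fun i _ => pow_pos (hp i).pos _) ?_
    (ffun p hp r) ?_ ?_ ?_ ?_ ?_
  · intro j hj hjM
    rw [hcast]
    exact IsCoprime.prod_left fun i _ => hpc i j hj hjM
  · intro x hx
    rw [hNd] at hx
    rcases ffun_key p hp r x x (fun i => Iff.rfl) with h | ⟨i, hi, _⟩
    · exact h.2.1
    · exact absurd (hx i) hi
  · intro x y hxy
    rw [hNd] at hxy
    rcases ffun_key p hp r x y (fun i => (dvd_iff_dvd_of_dvd_sub (hxy i))) with h | ⟨i, hi, h1, h2⟩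
    · rw [h.2.1, h.2.2]
    · rw [h1, h2]; exact gfun_per _ _ (r i) x y hi (hxy i)
  · intro x hx
    rw [hNd] at hx
    rcases ffun_key p hp r x x (fun i => Iff.rfl) with h | ⟨i, hi, h1, _⟩
    · exact absurd h.1 hx
    · rw [h1]; exact gfun_pm _ _ x (r i) hi
  · intro x
    rcases ffun_key p hp r x (-x) (fun i => dvd_neg.symm) with h | ⟨i, hi, h1, h2⟩
    · rw [h.2.1, h.2.2]; rfl
    · rw [h1, h2, ← neg_one_mul, gfun_mul _ _ _ _ (hnd i (-1) (by norm_num) (by simp; omega)) (hne0 i x hi),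
        hQ1 i]
      ring
  · intro x y j hx hy hj1 hjM hd
    rw [hNd] at hd
    have hj0 : j ≠ 0 := by omega
    have hja : |j| ≤ M := by rw [abs_le]; omega
    have hk0 : j - M ≠ 0 := by omega
    have hka : |j - M| ≤ M := by rw [abs_le]; omega
    have hiff : ∀ i, (p i : ℤ) ^ r i ∣ x ↔ (p i : ℤ) ^ r i ∣ y := by
      intro i
      rw [← hmulI i j x hj0 hja, ← hmulI i (j - M) y hk0 hka]
      exact dvd_iff_dvd_of_dvd_sub (hd i)
    rcases ffun_key p hp r x y hiff with h | ⟨i, hi, h1, h2⟩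
    · omega
    · have h3 := gfun_per _ (hp i) (r i) _ _ (by rwa [hmulI i j x hj0 hja]) (hd i)
      rw [gfun_mul _ _ _ _ (hnd i j hj0 hja) (hne0 i x hi),
        gfun_mul _ _ _ _ (hnd i _ hk0 hka) (hne0 i y (by rwa [← hiff i])), ← h1, ← h2, hx, hy,
        mul_one, mul_one] at h3
      lift j to ℕ using (by omega)
      have h4 := hQ2 i j (by omega) (by omega)
      rw [show (j : ℤ) - ((M + 1 : ℕ) : ℤ) + 1 = j - M by push_cast; ring, h3] at h4
      nlinarith [mul_self_nonneg (@legendreSym (p i) ⟨hp i⟩ ((j : ℤ) - M))]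
end

section
/- Let w ≥ 2 be an integer and let p_1 < p_2 < ... < p_n be primes with p_1 ≥ w. Suppose that for each i = 1, ..., n the Legendre symbol conditions hold: (-1/p_i) = -1, and (j/p_i)·((j-w+1)/p_i) = -1 for every j = 1, 2, ..., w-2. Suppose in addition that Σ_{i : p_i < 2w-1} (2w - 1 - p_i) ≤ w - 1. Then for any positive integers r_1, ..., r_n, the maximum number of codewords of a CAC of length (w-1)·p_1^{r_1}···p_n^{r_n} and weight w equals (p_1^{r_1}···p_n^{r_n} - 1)/2. -/
section
open scoped Pointwise

theorem mann_aux {G : Type} [AddCommGroup G] [Fintype G] [DecidableEq G] (S X : Finset G)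
    (hS : S.Nonempty) (hX : X.Nonempty) (h1 : X + S ≠ Finset.univ)
    (h2 : (X + S).card + 2 ≤ X.card + S.card) :
    ∃ H : AddSubgroup G, H ≠ ⊤ ∧ ∃ HF : Finset G, (∀ x, x ∈ HF ↔ x ∈ H) ∧
      (HF + S).card + 2 ≤ HF.card + S.card := by
  classical
  let F : Finset (Finset G) := Finset.univ.filter (fun X => X.Nonempty ∧ X + S ≠ Finset.univ)
  let φ : Finset G → ℤ := fun X => ((X + S).card : ℤ) - X.card
  have hXF : X ∈ F := by simp [F, hX, h1]
  obtain ⟨B, hBF, hB⟩ := Finset.exists_min_image F φ ⟨X, hXF⟩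
  obtain ⟨A, hA', hAmin⟩ := Finset.exists_min_image (F.filter (fun Y => φ Y = φ B)) Finset.card
    ⟨B, by simp [hBF]⟩
  obtain ⟨hAF, hAφ⟩ := Finset.mem_filter.1 hA'
  obtain ⟨hAne, hAu⟩ : A.Nonempty ∧ A + S ≠ Finset.univ := by simpa [F] using hAF
  have hmin : ∀ Y : Finset G, Y.Nonempty → Y + S ≠ Finset.univ → φ A ≤ φ Y := by
    intro Y hY hYS
    rw [hAφ]; exact hB Y (by simp [F, hY, hYS])
  have hmin2 : ∀ Y : Finset G, Y.Nonempty → Y + S ≠ Finset.univ → φ Y ≤ φ A → A.card ≤ Y.card := by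
    intro Y hY hYS h
    apply hAmin
    simp only [Finset.mem_filter]
    exact ⟨by simp [F, hY, hYS], by have := hmin Y hY hYS; omega⟩
  have neuniv : ∀ Y : Finset G, Y ≠ Finset.univ ↔ Y.card < Fintype.card G := by
    intro Y
    rw [← not_iff_not, not_lt, not_not, ← Finset.card_eq_iff_eq_univ]
    have := Finset.card_le_univ Y
    omega
  -- duality
  have hdual : 2 * (A.card : ℤ) + φ A ≤ Fintype.card G := by
    let D := -(A + S)ᶜ
    have hDc : D.card = Fintype.card G - (A + S).card := by
      simp only [D, Finset.card_neg, Finset.card_compl]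
    have hlt := (neuniv _).1 hAu
    have hDne : D.Nonempty := by
      rw [← Finset.card_pos]; omega
    have hsub : D + S ⊆ (-A)ᶜ := by
      intro x hx
      obtain ⟨d, hd, s, hs, rfl⟩ := Finset.mem_add.1 hx
      rw [Finset.mem_compl]
      intro hm
      have hm' : -(d + s) ∈ A := by simpa using hm
      have hd' : -d ∉ A + S := by simpa [D] using hd
      apply hd'
      have := Finset.add_mem_add hm' hs
      simpa using this
    have hc := Finset.card_le_card hsub
    rw [Finset.card_compl, Finset.card_neg] at hc
    have hApos := hAne.card_pos
    have hle : A.card ≤ Fintype.card G := Finset.card_le_univ A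
    have hDu : D + S ≠ Finset.univ := by rw [neuniv]; omega
    have hle2 : φ D ≤ φ A := by simp only [φ]; omega
    have := hmin2 D hDne hDu hle2
    simp only [φ]; omega
  have htrans : ∀ g : G, (φ (g +ᵥ A) = φ A ∧ (g +ᵥ A) + S ≠ Finset.univ ∧ (g +ᵥ A).card = A.card) := by
    intro g
    have e : (g +ᵥ A) + S = g +ᵥ (A + S) := vadd_add_assoc g A S
    simp only [φ, neuniv, e, Finset.card_vadd_finset]
    exact ⟨trivial, (neuniv _).1 hAu, trivial⟩
  have key : ∀ g : G, (A ∩ (g +ᵥ A)).Nonempty → g +ᵥ A = A := by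
    intro g hne
    obtain ⟨t1, t2, t3⟩ := htrans g
    set B' := g +ᵥ A
    by_contra hneq
    have hlt : (A ∩ B').card < A.card := by
      apply lt_of_le_of_ne (Finset.card_le_card Finset.inter_subset_left)
      intro h
      have h1 := Finset.eq_of_subset_of_card_le (Finset.inter_subset_left : A ∩ B' ⊆ A) h.ge
      have h2 : A ⊆ B' := by rw [← h1]; exact Finset.inter_subset_right
      exact hneq (Finset.eq_of_subset_of_card_le h2 t3.le).symm
    have hiu : (A ∩ B') + S ≠ Finset.univ := by
      rw [neuniv]
      exact lt_of_le_of_lt (Finset.card_le_card (Finset.add_subset_add_right Finset.inter_subset_left))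
        ((neuniv _).1 hAu)
    have hi : φ A < φ (A ∩ B') := by
      by_contra hcon
      have := hmin2 _ hne hiu (not_lt.1 hcon)
      omega
    have hsub : (A ∩ B') + S ⊆ (A + S) ∩ (B' + S) := Finset.inter_add_subset
    have hc := Finset.card_le_card hsub
    have e1 := Finset.card_union_add_card_inter (A + S) (B' + S)
    have e2 := Finset.card_union_add_card_inter A B'
    rw [← Finset.union_add] at e1
    have hpos := hne.card_pos
    have hu : (A ∪ B') + S ≠ Finset.univ := by
      rw [neuniv]
      simp only [φ] at *
      omega
    have := hmin _ (hAne.mono Finset.subset_union_left) hu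
    simp only [φ] at *
    omega
  obtain ⟨a, ha⟩ := hAne
  have hst : ∀ x ∈ A, ∀ y ∈ A, (x - y) +ᵥ A = A := by
    intro x hx y hy
    apply key
    refine ⟨x, Finset.mem_inter.2 ⟨hx, ?_⟩⟩
    rw [Finset.mem_vadd_finset]
    exact ⟨y, hy, by simp⟩
  let H : AddSubgroup G := AddAction.stabilizer G A
  have hH : ∀ x, x ∈ (-a) +ᵥ A ↔ x ∈ H := by
    intro x
    rw [iff_comm]
    simp only [Finset.mem_vadd_finset, H, AddAction.mem_stabilizer_iff]
    constructor
    · intro h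
      refine ⟨x + a, ?_, by simp⟩
      rw [← h, Finset.mem_vadd_finset]
      exact ⟨a, ha, rfl⟩
    · rintro ⟨y, hy, rfl⟩
      have := hst y hy a ha
      rwa [sub_eq_neg_add] at this
  refine ⟨H, ?_, (-a) +ᵥ A, hH, ?_⟩
  · intro ht
    obtain ⟨t1, t2, t3⟩ := htrans (-a)
    apply t2
    obtain ⟨s, hs⟩ := hS
    ext x
    simp only [Finset.mem_univ, iff_true]
    rw [Finset.mem_add]
    exact ⟨x - s, by rw [hH, ht]; trivial, s, hs, by simp⟩
  · obtain ⟨t1, t2, t3⟩ := htrans (-a)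
    have := hmin X hX h1
    simp only [φ] at *
    omega

theorem period_aux (w : ℕ) (hw : 2 ≤ w) : ∀ N : ℕ, ∀ (G : Type) [AddCommGroup G] [Fintype G] [DecidableEq G],
    Nat.card G = N → ∀ S : Finset G, S.card = w → (S - S).card + 2 ≤ 2 * w →
    ∃ H : AddSubgroup G, (∀ x ∈ H, x ∈ S - S) ∧ ¬ Nat.card H ∣ w - 1 := by
  intro N
  induction N using Nat.strong_induction_on with
  | _ N ih =>
  intro G _ _ _ hN S hSw hSS
  classical
  have hSne : S.Nonempty := by rw [← Finset.card_pos]; omega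
  by_cases huniv : S - S = Finset.univ
  · refine ⟨⊤, by simp [huniv], ?_⟩
    intro h
    have := Nat.le_of_dvd (by omega) h
    have h2 := Finset.card_le_univ S
    rw [AddSubgroup.card_top, Nat.card_eq_fintype_card] at this
    omega
  have e0 : -S + S = S - S := by rw [sub_eq_add_neg, add_comm]
  obtain ⟨H, hHt, HF, hmem, hH⟩ := mann_aux S (-S) hSne hSne.neg (by rwa [e0]) (by rw [e0, Finset.card_neg]; omega)
  have hHFc : HF.card = Nat.card H := by
    rw [Nat.card_eq_fintype_card, Fintype.card_subtype]
    congr 1; ext x; simp [hmem]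
  have hdvd : HF.card ∣ (HF + S).card := by
    have := AddSubgroup.card_add_eq_card_addSubgroup_add_card_quotient H (S : Set G)
    have e : (S : Set G) + (H : Set G) = ((HF + S : Finset G) : Set G) := by
      rw [add_comm HF S]; push_cast; congr 1; ext x; simp [hmem]
    rw [e] at this
    rw [hHFc]
    rw [Nat.card_coe_set_eq, Set.ncard_coe_finset] at this
    exact ⟨_, this⟩
  have hsubS : S ⊆ HF + S := by
    intro x hx
    rw [Finset.mem_add]; exact ⟨0, by simp [hmem, H.zero_mem], x, hx, by simp⟩
  have hSle := Finset.card_le_card hsubS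
  have hnd : ¬ Nat.card H ∣ w - 1 := by
    rw [← hHFc]
    rintro ⟨t, ht⟩
    obtain ⟨u, hu⟩ := hdvd
    have : t < u := by
      by_contra hc
      have := Nat.mul_le_mul_left HF.card (not_lt.1 hc)
      omega
    have := Nat.mul_le_mul_left HF.card (Nat.succ_le_of_lt this)
    rw [Nat.mul_succ] at this
    omega
  have hcoset : ∀ s : G, (s +ᵥ HF).card = HF.card := fun s => Finset.card_vadd_finset _ _
  have hmc : ∀ s x : G, x ∈ s +ᵥ HF ↔ x - s ∈ H := by
    intro s x
    rw [Finset.mem_vadd_finset]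
    constructor
    · rintro ⟨y, hy, rfl⟩; simpa using (hmem y).1 hy
    · intro h; exact ⟨x - s, (hmem _).2 h, by simp⟩
  by_cases hbig : ∃ s : G, HF.card < 2 * (S ∩ (s +ᵥ HF)).card
  · obtain ⟨s, hs⟩ := hbig
    refine ⟨H, ?_, hnd⟩
    intro x hx
    set T := S ∩ (s +ᵥ HF)
    have hx' : x +ᵥ T ⊆ s +ᵥ HF := by
      intro y hy
      obtain ⟨t, ht, rfl⟩ := Finset.mem_vadd_finset.1 hy
      have := (hmc s t).1 (Finset.mem_inter.1 ht).2
      rw [hmc]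
      have := H.add_mem hx this
      simpa [add_sub_assoc] using this
    have hu : T ∪ (x +ᵥ T) ⊆ s +ᵥ HF := Finset.union_subset Finset.inter_subset_right hx'
    have hu' := Finset.card_le_card hu
    have e2 := Finset.card_union_add_card_inter T (x +ᵥ T)
    rw [Finset.card_vadd_finset] at e2
    rw [hcoset] at hu'
    have hpos : 0 < (T ∩ (x +ᵥ T)).card := by omega
    obtain ⟨y, hy⟩ := Finset.card_pos.1 hpos
    obtain ⟨hy1, hy2⟩ := Finset.mem_inter.1 hy
    obtain ⟨t, ht, hty⟩ := Finset.mem_vadd_finset.1 hy2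
    rw [Finset.mem_sub]
    refine ⟨y, (Finset.mem_inter.1 hy1).1, t, (Finset.mem_inter.1 ht).1, ?_⟩
    rw [← hty]; simp
  push Not at hbig
  obtain ⟨s, hs⟩ := hSne
  have hone : ∀ s' ∈ S, s' - s ∈ H := by
    intro s' hs'
    by_contra hcon
    have hsubs : ∀ t ∈ S, t +ᵥ HF ⊆ HF + S := by
      intro t ht y hy
      obtain ⟨z, hz, rfl⟩ := Finset.mem_vadd_finset.1 hy
      rw [vadd_eq_add, add_comm t z]
      exact Finset.add_mem_add hz ht
    have hdis : Disjoint ((s +ᵥ HF) \ S) ((s' +ᵥ HF) \ S) := by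
      rw [Finset.disjoint_left]
      intro y hy hy'
      have h1 := (hmc _ _).1 (Finset.mem_sdiff.1 hy).1
      have h2 := (hmc _ _).1 (Finset.mem_sdiff.1 hy').1
      apply hcon
      have := H.sub_mem h1 h2
      simpa using this
    have hsub : (s +ᵥ HF) \ S ∪ (s' +ᵥ HF) \ S ⊆ (HF + S) \ S :=
      Finset.union_subset (Finset.sdiff_subset_sdiff (hsubs s hs) le_rfl)
        (Finset.sdiff_subset_sdiff (hsubs s' hs') le_rfl)
    have hc := Finset.card_le_card hsub
    rw [Finset.card_union_of_disjoint hdis, Finset.card_sdiff, Finset.card_sdiff, Finset.card_sdiff,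
      hcoset, hcoset, Finset.inter_eq_left.2 hsubS] at hc
    have b1 := hbig s
    have b2 := hbig s'
    have : 0 < HF.card := Finset.card_pos.2 ⟨0, (hmem _).2 H.zero_mem⟩
    omega
  -- recursion
  let S' : Finset H := Finset.univ.filter (fun h : H => (h : G) + s ∈ S)
  have hS'c : S'.card = w := by
    rw [← hSw]
    apply Finset.card_bij (fun (h : H) _ => (h : G) + s)
    · intro a ha; simpa [S'] using ha
    · intro a _ b _ hab; simpa using hab
    · intro b hb
      exact ⟨⟨b - s, hone b hb⟩, by simp [S', hb], by simp⟩
  have hS'S : ∀ x ∈ S' - S', (x : G) ∈ S - S := by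
    intro x hx
    obtain ⟨a, ha, b, hb, rfl⟩ := Finset.mem_sub.1 hx
    have ha' : (a : G) + s ∈ S := by simpa [S'] using ha
    have hb' : (b : G) + s ∈ S := by simpa [S'] using hb
    have := Finset.sub_mem_sub ha' hb'
    simpa using this
  have hcc : (S' - S').card ≤ (S - S).card :=
    Finset.card_le_card_of_injOn (fun x : H => (x : G)) hS'S (fun a _ b _ h => Subtype.ext h)
  have hlt : Nat.card H < N := by
    rw [← hN]
    apply lt_of_le_of_ne (Nat.card_le_card_of_injective _ H.subtype_injective)
    intro h
    exact hHt (AddSubgroup.eq_top_of_card_eq H h)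
  obtain ⟨K, hK1, hK2⟩ := ih _ hlt H rfl S' hS'c (by omega)
  refine ⟨K.map H.subtype, ?_, ?_⟩
  · rintro x ⟨y, hy, rfl⟩
    exact hS'S y (hK1 y hy)
  · rwa [Nat.card_congr (K.equivMapOfInjective _ H.subtype_injective).toEquiv.symm]

theorem dstar_eq {L : ℕ} (S : Finset (ZMod L)) : dstar S = (S - S).erase 0 := by
  unfold dstar
  congr 1

theorem common_aux {L : ℕ} [NeZero L] (q : ℕ) (hq : q.Prime) (H K : AddSubgroup (ZMod L))
    (hH : q ∣ Nat.card H) (hK : q ∣ Nat.card K) : ∃ x, x ≠ 0 ∧ x ∈ H ∧ x ∈ K := by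
  classical
  have : Fact q.Prime := ⟨hq⟩
  obtain ⟨x, hx⟩ := exists_prime_addOrderOf_dvd_card' q hH
  obtain ⟨y, hy⟩ := exists_prime_addOrderOf_dvd_card' q hK
  have hx' : addOrderOf (x : ZMod L) = q := by rw [AddSubgroup.addOrderOf_coe, hx]
  have hy' : addOrderOf (y : ZMod L) = q := by rw [AddSubgroup.addOrderOf_coe, hy]
  let T : Finset (ZMod L) := Finset.univ.filter (fun a => q • a = 0)
  have hT : T.card ≤ q := IsAddCyclic.card_nsmul_eq_zero_le hq.pos
  let Z : Finset (ZMod L) := Finset.univ.filter (fun a => a ∈ AddSubgroup.zmultiples (y : ZMod L))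
  have hZ : Z.card = q := by
    rw [← hy', ← Nat.card_zmultiples, Nat.card_eq_fintype_card, Fintype.card_subtype]
  have hZT : Z ⊆ T := by
    intro a ha
    simp only [Z, T, Finset.mem_filter, Finset.mem_univ, true_and] at ha ⊢
    obtain ⟨k, rfl⟩ := AddSubgroup.mem_zmultiples_iff.1 ha
    rw [smul_comm, ← hy', addOrderOf_nsmul_eq_zero, smul_zero]
  have hEq := Finset.eq_of_subset_of_card_le hZT (by omega)
  have hxT : (x : ZMod L) ∈ Z := by
    rw [hEq]
    simp only [T, Finset.mem_filter, Finset.mem_univ, true_and]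
    rw [← hx', addOrderOf_nsmul_eq_zero]
  refine ⟨x, ?_, x.2, ?_⟩
  · intro h
    rw [h, addOrderOf_zero] at hx'
    exact hq.one_lt.ne hx'
  · simp only [Z, Finset.mem_filter, Finset.mem_univ, true_and] at hxT
    exact (AddSubgroup.zmultiples_le_of_mem y.2) hxT

theorem upper_aux (w n M : ℕ) (hw : 2 ≤ w) (p : Fin n → ℕ) (hM : Odd M)
    (hMp : ∀ q : ℕ, q.Prime → q ∣ M → ∃ i, p i = q)
    (hsum : ∑ i ∈ Finset.univ.filter (fun i => p i < 2 * w - 1), (2 * w - 1 - p i) ≤ w - 1)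
    (C : Finset (Finset (ZMod ((w - 1) * M)))) (hC : IsCAC ((w - 1) * M) w C) :
    C.card ≤ (M - 1) / 2 := by
  classical
  have hMpos : 0 < M := hM.pos
  have : NeZero ((w - 1) * M) := ⟨by
    have : 0 < (w - 1) * M := Nat.mul_pos (by omega) hMpos
    omega⟩
  obtain ⟨hC1, hC2⟩ := hC
  have hcard : ∀ S ∈ C, (dstar S).card + 1 = (S - S).card := by
    intro S hS
    rw [dstar_eq]
    apply Finset.card_erase_add_one
    have : S.Nonempty := by rw [← Finset.card_pos, hC1 S hS]; omega
    obtain ⟨s, hs⟩ := this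
    rw [Finset.mem_sub]
    exact ⟨s, hs, s, hs, sub_self s⟩
  let E := C.filter (fun S => (S - S).card + 2 ≤ 2 * w)
  have hex : ∀ S ∈ E, ∃ i, (p i).Prime ∧ ∃ H : AddSubgroup (ZMod ((w - 1) * M)),
      (∀ x ∈ H, x ∈ S - S) ∧ p i ∣ Nat.card H := by
    intro S hS
    obtain ⟨hSC, hS2⟩ := Finset.mem_filter.1 hS
    obtain ⟨H, hH1, hH2⟩ := period_aux w hw _ _ rfl S (hC1 S hSC) hS2
    have hd : Nat.card H ∣ (w - 1) * M := by
      have := AddSubgroup.card_addSubgroup_dvd_card H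
      rwa [Nat.card_zmod] at this
    have hnc : ¬ Nat.Coprime (Nat.card H) M := fun h => hH2 (h.dvd_of_dvd_mul_right hd)
    obtain ⟨q, hq, hq1, hq2⟩ := Nat.Prime.not_coprime_iff_dvd.1 hnc
    obtain ⟨i, rfl⟩ := hMp q hq hq2
    exact ⟨i, hq, H, hH1, hq1⟩
  choose f hfp hfH using hex
  let g : {S // S ∈ E} → Fin n := fun S => f S.1 S.2
  have hginj : Function.Injective g := by
    rintro ⟨S, hS⟩ ⟨S', hS'⟩ h
    have h : f S hS = f S' hS' := h
    obtain ⟨H, h1, h2⟩ := hfH S hS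
    obtain ⟨H', h1', h2'⟩ := hfH S' hS'
    rw [← h] at h2'
    obtain ⟨x, hx0, hx, hx'⟩ := common_aux _ (hfp S hS) H H' h2 h2'
    by_contra hne
    have hne' : S ≠ S' := fun h => hne (Subtype.ext h)
    have hd := hC2 S (Finset.mem_filter.1 hS).1 S' (Finset.mem_filter.1 hS').1 hne'
    rw [dstar_eq, dstar_eq] at hd
    exact Finset.disjoint_left.1 hd (Finset.mem_erase.2 ⟨hx0, h1 x hx⟩)
      (Finset.mem_erase.2 ⟨hx0, h1' x hx'⟩)
  have hgp : ∀ S : {S // S ∈ E}, p (g S) ≤ (S.1 - S.1).card := by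
    rintro ⟨S, hS⟩
    obtain ⟨H, h1, h2⟩ := hfH S hS
    refine (Nat.le_of_dvd Nat.card_pos h2).trans ?_
    rw [Nat.card_eq_fintype_card, Fintype.card_subtype]
    apply Finset.card_le_card
    intro x hx
    exact h1 x (Finset.mem_filter.1 hx).2
  have hEsum : ∑ S ∈ E, (2 * w - 1 - (S - S).card) ≤ w - 1 := by
    refine le_trans ?_ hsum
    rw [← Finset.sum_attach]
    calc _ ≤ ∑ S ∈ E.attach, (2 * w - 1 - p (g S)) := by
          apply Finset.sum_le_sum
          intro S _
          have := hgp S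
          omega
      _ = ∑ i ∈ E.attach.image g, (2 * w - 1 - p i) :=
          (Finset.sum_image (f := fun i => 2 * w - 1 - p i) (hginj.injOn)).symm
      _ ≤ _ := by
          apply Finset.sum_le_sum_of_subset
          intro i hi
          obtain ⟨S, _, rfl⟩ := Finset.mem_image.1 hi
          have h1 := hgp S
          have h2 := (Finset.mem_filter.1 S.2).2
          simp only [Finset.mem_filter, Finset.mem_univ, true_and]
          omega
  have hCsum : ∑ S ∈ C, (2 * w - 1 - (S - S).card) ≤ w - 1 := by
    refine le_trans (le_of_eq ?_) hEsum
    symm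
    apply Finset.sum_subset (Finset.filter_subset _ _)
    intro S hS hSE
    have : ¬ ((S - S).card + 2 ≤ 2 * w) := fun h => hSE (Finset.mem_filter.2 ⟨hS, h⟩)
    omega
  have htot : ∑ S ∈ C, (dstar S).card + 1 ≤ (w - 1) * M := by
    rw [← Finset.card_biUnion (fun S hS S' hS' h => hC2 S hS S' hS' h)]
    have hsub : C.biUnion dstar ⊆ Finset.univ.erase 0 := by
      intro x hx
      obtain ⟨S, _, hS⟩ := Finset.mem_biUnion.1 hx
      rw [dstar_eq] at hS
      exact Finset.mem_erase.2 ⟨(Finset.mem_erase.1 hS).1, Finset.mem_univ _⟩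
    have h1 := Finset.card_le_card hsub
    have h2 := Finset.card_erase_add_one (Finset.mem_univ (0 : ZMod ((w - 1) * M)))
    rw [Finset.card_univ, ZMod.card] at h2
    omega
  have hmain : C.card * (2 * w - 2) ≤ ∑ S ∈ C, (dstar S).card + ∑ S ∈ C, (2 * w - 1 - (S - S).card) := by
    rw [← Finset.sum_add_distrib, ← smul_eq_mul, ← Finset.sum_const]
    apply Finset.sum_le_sum
    intro S hS
    have := hcard S hS
    omega
  obtain ⟨v, rfl⟩ : ∃ v, w = v + 1 := ⟨w - 1, by omega⟩
  obtain ⟨m, rfl⟩ := hM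
  have e1 : 2 * (v + 1) - 2 = 2 * v := by omega
  have e2 : (2 * m + 1 - 1) / 2 = m := by omega
  rw [e1] at hmain
  rw [e2]
  simp only [Nat.add_sub_cancel] at htot hCsum
  by_contra hcon
  have hcon : m + 1 ≤ C.card := by omega
  have := Nat.mul_le_mul_right (2 * v) hcon
  nlinarith

/-- The prime used for the sign of `a`. -/
def sgnQ (M : ℕ) (a : ZMod M) : ℕ := (M / Nat.gcd a.val M).minFac

/-- The sign of `a`. -/
def sgnF (M : ℕ) (a : ZMod M) : ℤ := jacobiSym ((a.val / Nat.gcd a.val M : ℕ) : ℤ) (sgnQ M a)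

theorem sgn_gcd {M : ℕ} [NeZero M] (a : ZMod M) (k : ℤ) (hk : IsCoprime k (M : ℤ)) :
    Nat.gcd ((k : ZMod M) * a).val M = Nat.gcd a.val M := by
  have h1 : ((((k : ZMod M) * a).val : ℤ)) = (k * a.val) % M := by
    rw [← ZMod.val_intCast]; simp
  have h2 : Int.gcd ((k * a.val) % M) M = Int.gcd (k * a.val) M := by
    exact Int.gcd_emod _ _
  have h3 : Int.gcd (k * a.val) M = Int.gcd a.val M := by
    rw [Int.gcd_comm, Int.gcd_comm _ (M : ℤ), mul_comm]
    exact Int.gcd_mul_left_right_of_gcd_eq_one (by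
      rw [Int.gcd_comm]; exact Int.isCoprime_iff_gcd_eq_one.1 hk)
  rw [← Int.gcd_natCast_natCast, h1, h2, h3, Int.gcd_natCast_natCast]

theorem sgn_prime {M : ℕ} [NeZero M] (a : ZMod M) (ha : a ≠ 0) :
    (sgnQ M a).Prime ∧ sgnQ M a ∣ M / Nat.gcd a.val M ∧ sgnQ M a ∣ M := by
  have hM : 0 < M := Nat.pos_of_ne_zero (NeZero.ne M)
  have hne : M / Nat.gcd a.val M ≠ 1 := by
    intro h
    have h1 := Nat.div_mul_cancel (Nat.gcd_dvd_right a.val M)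
    rw [h, one_mul] at h1
    have h2 : M ∣ a.val := by
      have := Nat.gcd_dvd_left a.val M
      rwa [h1] at this
    have h3 := Nat.eq_zero_of_dvd_of_lt h2 (ZMod.val_lt a)
    exact ha ((ZMod.val_eq_zero a).1 h3)
  refine ⟨Nat.minFac_prime hne, Nat.minFac_dvd _, (Nat.minFac_dvd _).trans ?_⟩
  exact Nat.div_dvd_of_dvd (Nat.gcd_dvd_right a.val M)

theorem sgnQ_mul {M : ℕ} [NeZero M] (a : ZMod M) (k : ℤ) (hk : IsCoprime k (M : ℤ)) :
    sgnQ M ((k : ZMod M) * a) = sgnQ M a := by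
  unfold sgnQ; rw [sgn_gcd a k hk]

theorem sgnF_mul {M : ℕ} [NeZero M] (a : ZMod M) (ha : a ≠ 0) (k : ℤ) (hk : IsCoprime k (M : ℤ)) :
    sgnF M ((k : ZMod M) * a) = jacobiSym k (sgnQ M a) * sgnF M a := by
  obtain ⟨hq, hqd, hqM⟩ := sgn_prime a ha
  have hM : 0 < M := Nat.pos_of_ne_zero (NeZero.ne M)
  unfold sgnF
  rw [sgnQ_mul a k hk, sgn_gcd a k hk, ← jacobiSym.mul_left]
  have h1 : ((((k : ZMod M) * a).val : ℤ)) = (k * a.val) % M := by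
    rw [← ZMod.val_intCast]; simp
  have hg := Nat.gcd_pos_of_pos_right a.val hM
  have hd1 := Nat.gcd_dvd_left a.val M
  have hd2 := Nat.gcd_dvd_right a.val M
  have hd3 : Nat.gcd a.val M ∣ ((k : ZMod M) * a).val := by
    rw [← sgn_gcd a k hk]; exact Nat.gcd_dvd_left _ _
  set g := Nat.gcd a.val M
  obtain ⟨b, hb⟩ := hd1
  obtain ⟨d, hd⟩ := hd2
  obtain ⟨b', hb'⟩ := hd3
  have hd' : M / g = d := by conv_lhs => rw [hd]
                             exact Nat.mul_div_cancel_left _ hg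
  rw [hd'] at hqd
  obtain ⟨c, hc⟩ := hqd
  rw [hb', hb, Nat.mul_div_cancel_left _ hg, Nat.mul_div_cancel_left _ hg]
  have h2 := Int.emod_add_mul_ediv (k * a.val) M
  rw [← h1, hb', hb] at h2
  set t := (k * ((g * b : ℕ) : ℤ)) / (M : ℤ)
  have hMd : (M : ℤ) = g * d := by exact_mod_cast hd
  rw [hMd] at h2
  have hg0 : (g : ℤ) ≠ 0 := by exact_mod_cast hg.ne'
  have h3 : (b' : ℤ) + d * t = k * b := by
    apply mul_left_cancel₀ hg0
    push_cast at h2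
    linarith
  have h4 : (k * b) % (sgnQ M a : ℤ) = (b' : ℤ) % (sgnQ M a : ℤ) := by
    rw [← h3, hc]; push_cast
    rw [mul_assoc, Int.add_mul_emod_self_left]
  rw [jacobiSym.mod_left, ← h4, ← jacobiSym.mod_left]

theorem sgnF_val {M : ℕ} [NeZero M] (a : ZMod M) (ha : a ≠ 0) : sgnF M a = 1 ∨ sgnF M a = -1 := by
  obtain ⟨hq, hqd, hqM⟩ := sgn_prime a ha
  have hM : 0 < M := Nat.pos_of_ne_zero (NeZero.ne M)
  apply jacobiSym.eq_one_or_neg_one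
  rw [Int.gcd_natCast_natCast]
  have := Nat.coprime_div_gcd_div_gcd (Nat.gcd_pos_of_pos_right a.val hM)
  exact Nat.Coprime.coprime_dvd_right hqd this

theorem lower_aux (w M : ℕ) (hw : 2 ≤ w) (hM : Odd M)
    (hq : ∀ q : ℕ, q.Prime → q ∣ M → w ≤ q ∧ jacobiSym (-1) q = -1 ∧
      ∀ j : ℕ, 1 ≤ j → j ≤ w - 2 → jacobiSym (j : ℤ) q * jacobiSym ((j : ℤ) - w + 1) q = -1) :
    ∃ C : Finset (Finset (ZMod ((w - 1) * M))), IsCAC ((w - 1) * M) w C ∧ C.card = (M - 1) / 2 := by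
  classical
  have hMpos : 0 < M := hM.pos
  have : NeZero M := ⟨hMpos.ne'⟩
  have hcopn : ∀ k : ℕ, 0 < k → k < w → Nat.Coprime k M := by
    intro k hk hkw
    by_contra hnc
    obtain ⟨q, hqp, hq1, hq2⟩ := Nat.Prime.not_coprime_iff_dvd.1 hnc
    have := (hq q hqp hq2).1
    have := Nat.le_of_dvd hk hq1
    omega
  have hcop : ∀ k : ℤ, k ≠ 0 → |k| < w → IsCoprime k (M : ℤ) := by
    intro k hk hkw
    rw [Int.isCoprime_iff_gcd_eq_one, Int.gcd_def]
    rw [abs_lt] at hkw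
    exact hcopn _ (by omega) (by omega)
  have hcw : Nat.Coprime (w - 1) M := hcopn _ (by omega) (by omega)
  have hunit : ∀ k : ℤ, IsCoprime k (M : ℤ) → ∀ a b : ZMod M, (k : ZMod M) * a = k * b → a = b := by
    rintro k ⟨u, v, h⟩ a b hab
    have h1 : (u : ZMod M) * k = 1 := by
      have := congrArg (Int.cast : ℤ → ZMod M) h
      simpa using this
    calc a = (u * k) * a := by rw [h1, one_mul]
      _ = (u * k) * b := by rw [mul_assoc, hab, mul_assoc]
      _ = b := by rw [h1, one_mul]
  let e := ZMod.chineseRemainder hcw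
  let x : ZMod M → ZMod ((w - 1) * M) := fun a => e.symm (1, a)
  have hex : ∀ (k : ℤ) (a : ZMod M), e ((k : ZMod ((w - 1) * M)) * x a) = ((k : ZMod (w - 1)), (k : ZMod M) * a) := by
    intro k a
    rw [map_mul, map_intCast]
    simp only [x, RingEquiv.apply_symm_apply]
    ext <;> simp
  let A : Finset (ZMod M) := Finset.univ.filter (fun a => a ≠ 0 ∧ sgnF M a = 1)
  let B : Finset (ZMod M) := Finset.univ.filter (fun a => a ≠ 0 ∧ sgnF M a = -1)
  have hneg1 : IsCoprime (-1 : ℤ) (M : ℤ) := by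
    rw [IsCoprime.neg_left_iff]; exact isCoprime_one_left
  have hneg : ∀ a : ZMod M, a ≠ 0 → sgnF M (-a) = - sgnF M a := by
    intro a ha
    have := sgnF_mul a ha (-1) hneg1
    obtain ⟨h1, _, h2⟩ := sgn_prime a ha
    rw [(hq _ h1 h2).2.1] at this
    simpa using this
  have hAB : A.card = B.card := by
    apply Finset.card_bij (fun a _ => -a)
    · intro a ha
      simp only [A, B, Finset.mem_filter, Finset.mem_univ, true_and] at ha ⊢
      exact ⟨neg_ne_zero.2 ha.1, by rw [hneg a ha.1, ha.2]⟩
    · intro a _ b _ h; exact neg_injective h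
    · intro b hb
      simp only [A, B, Finset.mem_filter, Finset.mem_univ, true_and] at hb ⊢
      exact ⟨-b, ⟨neg_ne_zero.2 hb.1, by rw [hneg b hb.1, hb.2]; norm_num⟩, by simp⟩
  have hAcard : A.card = (M - 1) / 2 := by
    have hd : Disjoint A B := by
      rw [Finset.disjoint_left]
      intro a ha hb
      simp only [A, B, Finset.mem_filter] at ha hb
      have := ha.2.2; have := hb.2.2; omega
    have hU : A ∪ B = Finset.univ.erase 0 := by
      ext a
      simp only [A, B, Finset.mem_union, Finset.mem_filter, Finset.mem_univ, true_and,
        Finset.mem_erase, and_true]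
      constructor
      · rintro (h | h) <;> exact h.1
      · intro h
        rcases sgnF_val a h with h' | h'
        · exact Or.inl ⟨h, h'⟩
        · exact Or.inr ⟨h, h'⟩
    have h1 := Finset.card_union_of_disjoint hd
    have h2 := Finset.card_erase_add_one (Finset.mem_univ (0 : ZMod M))
    rw [Finset.card_univ, ZMod.card] at h2
    rw [hU] at h1
    omega
  let W : ZMod M → Finset (ZMod ((w - 1) * M)) := fun a =>
    (Finset.range w).image (fun j : ℕ => ((j : ℤ) : ZMod ((w - 1) * M)) * x a)
  -- zero-free
  have hnz : ∀ a : ZMod M, a ≠ 0 → ∀ k : ℤ, k ≠ 0 → |k| < w → (k : ZMod ((w - 1) * M)) * x a ≠ 0 := by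
    intro a ha k hk hkw h
    have := hex k a
    rw [h, map_zero] at this
    have h2 : (k : ZMod M) * a = k * 0 := by
      rw [mul_zero]; exact (congrArg Prod.snd this).symm
    exact ha (hunit k (hcop k hk hkw) _ _ h2)
  have hWcard : ∀ a ∈ A, (W a).card = w := by
    intro a ha
    have ha0 : a ≠ 0 := (Finset.mem_filter.1 ha).2.1
    simp only [W]
    rw [Finset.card_image_of_injOn, Finset.card_range]
    intro i hi j hj hij
    by_contra hne
    have hi := Finset.mem_range.1 hi
    have hj := Finset.mem_range.1 hj
    apply hnz a ha0 ((i : ℤ) - j) (by omega) (by rw [abs_lt]; omega)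
    have hij : ((i : ℤ) : ZMod ((w - 1) * M)) * x a = ((j : ℤ) : ZMod ((w - 1) * M)) * x a := hij
    rw [Int.cast_sub, sub_mul, hij, sub_self]
  have hWd : ∀ a, ∀ y ∈ dstar (W a), ∃ k : ℤ, k ≠ 0 ∧ |k| < w ∧ y = (k : ZMod ((w - 1) * M)) * x a := by
    intro a y hy
    rw [dstar_eq, Finset.mem_erase, Finset.mem_sub] at hy
    obtain ⟨hy0, u, hu, v, hv, rfl⟩ := hy
    obtain ⟨i, hi, rfl⟩ := Finset.mem_image.1 hu
    obtain ⟨j, hj, rfl⟩ := Finset.mem_image.1 hv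
    have hi := Finset.mem_range.1 hi
    have hj := Finset.mem_range.1 hj
    refine ⟨(i : ℤ) - j, ?_, by rw [abs_lt]; omega, by rw [Int.cast_sub, sub_mul]⟩
    intro h
    apply hy0
    have : i = j := by omega
    rw [this, sub_self]
  have hkey : ∀ a ∈ A, ∀ b ∈ A, ∀ k l : ℤ, k ≠ 0 → l ≠ 0 → |k| < w → |l| < w → l ≤ k →
      (k : ZMod ((w - 1) * M)) * x a = (l : ZMod ((w - 1) * M)) * x b → a = b := by
    intro a ha b hb k l hk hl hkw hlw hlk h
    obtain ⟨ha0, ha1⟩ := (Finset.mem_filter.1 ha).2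
    obtain ⟨hb0, hb1⟩ := (Finset.mem_filter.1 hb).2
    have h1 := congrArg e h
    rw [hex, hex] at h1
    have hfst : (k : ZMod (w - 1)) = l := congrArg Prod.fst h1
    have hsnd : (k : ZMod M) * a = l * b := congrArg Prod.snd h1
    have hck := hcop k hk hkw
    have hcl := hcop l hl hlw
    have hQ : sgnQ M a = sgnQ M b := by
      rw [← sgnQ_mul a k hck, hsnd, sgnQ_mul b l hcl]
    have hJ : jacobiSym k (sgnQ M a) = jacobiSym l (sgnQ M a) := by
      have := sgnF_mul a ha0 k hck
      rw [hsnd, sgnF_mul b hb0 l hcl, ha1, hb1, mul_one, mul_one] at this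
      rw [← this, hQ]
    obtain ⟨hqp, _, hqM⟩ := sgn_prime a ha0
    obtain ⟨hwq, hm1, hjj⟩ := hq _ hqp hqM
    have hJk : jacobiSym k (sgnQ M a) = 1 ∨ jacobiSym k (sgnQ M a) = -1 := by
      apply jacobiSym.eq_one_or_neg_one
      rw [← Int.isCoprime_iff_gcd_eq_one]
      exact hck.of_isCoprime_of_dvd_right (by exact_mod_cast hqM)
    have hdvd : ((w - 1 : ℕ) : ℤ) ∣ k - l := by
      rw [← ZMod.intCast_zmod_eq_zero_iff_dvd, Int.cast_sub, hfst, sub_self]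
    rw [abs_lt] at hkw hlw
    obtain ⟨t, ht⟩ := hdvd
    have hw1 : ((w - 1 : ℕ) : ℤ) = w - 1 := by omega
    rw [hw1] at ht
    have ht0 : 0 ≤ t := by
      by_contra hc
      nlinarith
    have ht2 : t ≤ 2 := by
      by_contra hc
      nlinarith
    have : t = 0 ∨ t = 1 ∨ t = 2 := by omega
    rcases this with rfl | rfl | rfl
    · have : k = l := by linarith
      subst this
      exact hunit k hck a b hsnd
    · exfalso
      have hk1 : 1 ≤ k := by omega
      have := hjj k.toNat (by omega) (by omega)
      rw [Int.toNat_of_nonneg (by omega)] at this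
      have hl' : k - w + 1 = l := by linarith
      rw [hl', ← hJ] at this
      rcases hJk with h | h <;> rw [h] at this <;> norm_num at this
    · exfalso
      have hl' : l = -1 * k := by omega
      rw [hl', jacobiSym.mul_left, hm1] at hJ
      rcases hJk with h | h <;> rw [h] at hJ <;> norm_num at hJ
  have hdis : ∀ a ∈ A, ∀ b ∈ A, a ≠ b → Disjoint (dstar (W a)) (dstar (W b)) := by
    intro a ha b hb hab
    rw [Finset.disjoint_left]
    intro y hy hy'
    obtain ⟨k, hk, hkw, h1⟩ := hWd a y hy
    obtain ⟨l, hl, hlw, h2⟩ := hWd b y hy'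
    rcases le_total l k with h | h
    · exact hab (hkey a ha b hb k l hk hl hkw hlw h (h1.symm.trans h2))
    · exact hab (hkey b hb a ha l k hl hk hlw hkw h (h2.symm.trans h1)).symm
  have hWinj : Set.InjOn W A := by
    intro a ha b hb h
    by_contra hab
    have hd := hdis a ha b hb hab
    rw [h, disjoint_self] at hd
    have hc := hWcard b hb
    obtain ⟨u, hu, v, hv, huv⟩ := Finset.one_lt_card.1 (by omega : 1 < (W b).card)
    have : u - v ∈ dstar (W b) := by
      rw [dstar_eq, Finset.mem_erase]
      exact ⟨sub_ne_zero.2 huv, Finset.sub_mem_sub hu hv⟩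
    rw [hd] at this
    simp at this
  refine ⟨A.image W, ⟨?_, ?_⟩, ?_⟩
  · intro S hS
    obtain ⟨a, ha, rfl⟩ := Finset.mem_image.1 hS
    exact hWcard a ha
  · intro S hS S' hS' hne
    obtain ⟨a, ha, rfl⟩ := Finset.mem_image.1 hS
    obtain ⟨b, hb, rfl⟩ := Finset.mem_image.1 hS'
    exact hdis a ha b hb (fun h => hne (by rw [h]))
  · rw [Finset.card_image_of_injOn hWinj, hAcard]

end

theorem stmt_3 (w n : ℕ) (hw : 2 ≤ w) (p : Fin n → ℕ) (hp : ∀ i, (p i).Prime)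
    (hmono : StrictMono p) (hpw : ∀ i, w ≤ p i)
    (hQ1 : ∀ i, @legendreSym (p i) ⟨hp i⟩ (-1) = -1)
    (hQ2 : ∀ i, ∀ j : ℕ, 1 ≤ j → j ≤ w - 2 →
      @legendreSym (p i) ⟨hp i⟩ (j : ℤ) * @legendreSym (p i) ⟨hp i⟩ ((j : ℤ) - w + 1) = -1)
    (hsum : ∑ i ∈ Finset.univ.filter (fun i => p i < 2 * w - 1), (2 * w - 1 - p i) ≤ w - 1)
    (r : Fin n → ℕ) (hr : ∀ i, 0 < r i) :
    IsGreatest {k : ℕ | ∃ C : Finset (Finset (ZMod ((w - 1) * ∏ i, p i ^ r i))),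
        IsCAC ((w - 1) * ∏ i, p i ^ r i) w C ∧ C.card = k}
      (((∏ i, p i ^ r i) - 1) / 2) := by
  have hMp : ∀ q : ℕ, q.Prime → q ∣ ∏ i, p i ^ r i → ∃ i, p i = q := by
    intro q hq hd
    obtain ⟨i, _, hi⟩ := hq.prime.exists_mem_finset_dvd hd
    exact ⟨i, ((Nat.prime_dvd_prime_iff_eq hq (hp i)).1 (hq.dvd_of_dvd_pow hi)).symm⟩
  have hodd : Odd (∏ i, p i ^ r i) := by
    rw [← Nat.not_even_iff_odd, even_iff_two_dvd]
    intro h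
    obtain ⟨i, hi⟩ := hMp 2 Nat.prime_two h
    have : Fact (p i).Prime := ⟨hp i⟩
    have h1 : legendreSym (p i) (-1) = -1 := hQ1 i
    rw [legendreSym.eq_neg_one_iff] at h1
    apply h1
    have hc : ((-1 : ℤ) : ZMod (p i)) = 1 := by
      have : ((-1 : ℤ) : ZMod (p i)) = ((1 : ℤ) : ZMod (p i)) := by
        rw [ZMod.intCast_eq_intCast_iff, hi]
        decide
      simpa using this
    rw [hc]
    exact ⟨1, by simp⟩
  constructor
  · apply lower_aux w _ hw hodd
    intro q hq hd
    obtain ⟨i, rfl⟩ := hMp q hq hd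
    have : Fact (p i).Prime := ⟨hp i⟩
    have hj : ∀ a : ℤ, jacobiSym a (p i) = legendreSym (p i) a :=
      fun a => (jacobiSym.legendreSym.to_jacobiSym (p i) a).symm
    simp only [hj]
    exact ⟨hpw i, hQ1 i, hQ2 i⟩
  · rintro k ⟨C, hC, rfl⟩
    exact upper_aux w n _ hw p hodd hMp hsum C hC
end

section
/- Let w ≥ 2 be an integer and let p_1 < p_2 < ... < p_n be primes such that 2w - 2 divides p_i - 1 for each i. Suppose that for each i = 1, ..., n there exists an equi-difference CAC of length p_i and weight w with (p_i - 1)/(2w - 2) codewords. Then for any positive integers r_1, ..., r_n, the maximum number of codewords of a CAC of length p_1^{r_1}···p_n^{r_n} and weight w equals (p_1^{r_1}···p_n^{r_n} - 1)/(2w - 2). -/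
noncomputable def MM (w : ℕ) : Finset ℤ := (Finset.Ioo (-(w : ℤ)) w).erase 0

lemma mem_MM {w : ℕ} {m : ℤ} : m ∈ MM w ↔ m ≠ 0 ∧ -(w : ℤ) < m ∧ m < w := by
  simp [MM]

lemma card_MM {w : ℕ} (hw : 2 ≤ w) : (MM w).card = 2 * w - 2 := by
  unfold MM
  rw [Finset.card_erase_of_mem (by simp; omega), Int.card_Ioo]
  omega

def Splits' (w : ℕ) (A : Type) [AddCommGroup A] (G : Set A) : Prop :=
  (∀ x : A, x ≠ 0 → ∃ m ∈ MM w, ∃ g ∈ G, x = m • g) ∧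
  (∀ m ∈ MM w, ∀ m' ∈ MM w, ∀ g ∈ G, ∀ g' ∈ G, m • g = m' • g' → m = m' ∧ g = g')

lemma Splits'.ne_zero {w : ℕ} (hw : 2 ≤ w) {A : Type} [AddCommGroup A] {G : Set A}
    (h : Splits' w A G) {g : A} (hg : g ∈ G) : g ≠ 0 := by
  rintro rfl
  have := h.2 1 (by rw [mem_MM]; omega) (-1) (by rw [mem_MM]; omega) 0 hg 0 hg (by simp)
  omega

lemma coprime_aux {w c : ℕ} (hc : ∀ q : ℕ, q.Prime → q ∣ c → 2 * w - 1 ≤ q) {m : ℤ} (h0 : m ≠ 0)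
    (h2 : m.natAbs < 2 * w - 1) : m.natAbs.Coprime c := by
  apply Nat.Coprime.symm
  apply Nat.coprime_of_dvd
  intro q hq hqc hqm
  have := hc q hq hqc
  have := Nat.le_of_dvd (by omega) hqm
  omega

lemma smul_inj_aux {A : Type} [AddCommGroup A] {m : ℤ}
    (h : m.natAbs.Coprime (Nat.card A)) {x : A} (hx : m • x = 0) : x = 0 := by
  have h1 : addOrderOf x ∣ m.natAbs := by
    have := addOrderOf_dvd_iff_zsmul_eq_zero.2 hx
    exact Int.natCast_dvd.1 this
  have h2 : addOrderOf x ∣ Nat.card A := addOrderOf_dvd_natCard x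
  have := Nat.dvd_gcd h1 h2
  rw [h] at this
  exact AddMonoid.addOrderOf_eq_one_iff.1 (Nat.dvd_one.1 this)

lemma smul_surj_aux {A : Type} [AddCommGroup A] [Finite A] {m : ℤ}
    (h : m.natAbs.Coprime (Nat.card A)) (x : A) : ∃ y : A, m • y = x := by
  have hi : Function.Injective (fun y : A => m • y) := by
    intro a b hab
    have : m • (a - b) = 0 := by rw [smul_sub]; exact sub_eq_zero.2 hab
    exact sub_eq_zero.1 (smul_inj_aux h this)
  exact Finite.surjective_of_injective hi x

lemma splits_ext {w : ℕ} (hw : 2 ≤ w) {A B C : Type} [AddCommGroup A] [AddCommGroup B]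
    [AddCommGroup C] [Finite B] [Finite C] (f : A →+ B) (h : B →+ C)
    (hf : Function.Injective f) (hex : ∀ x, h x = 0 ↔ ∃ a, f a = x)
    (hB : ∀ q : ℕ, q.Prime → q ∣ Nat.card B → 2 * w - 1 ≤ q)
    (hC : ∀ q : ℕ, q.Prime → q ∣ Nat.card C → 2 * w - 1 ≤ q)
    {GA : Set A} {GC : Set C} (hA : Splits' w A GA) (hGC : Splits' w C GC) :
    ∃ G, Splits' w B G := by
  have cB : ∀ m ∈ MM w, m.natAbs.Coprime (Nat.card B) := fun m hm => by
    rw [mem_MM] at hm; exact coprime_aux hB hm.1 (by omega)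
  have cC : ∀ m ∈ MM w, m.natAbs.Coprime (Nat.card C) := fun m hm => by
    rw [mem_MM] at hm; exact coprime_aux hC hm.1 (by omega)
  refine ⟨f '' GA ∪ h ⁻¹' GC, ?_, ?_⟩
  · intro x hx
    by_cases hx0 : h x = 0
    · obtain ⟨a, rfl⟩ := (hex x).1 hx0
      obtain ⟨m, hm, g, hg, rfl⟩ := hA.1 a (by rintro rfl; simp at hx)
      exact ⟨m, hm, f g, Or.inl ⟨g, hg, rfl⟩, by simp⟩
    · obtain ⟨m, hm, c, hc, hxc⟩ := hGC.1 _ hx0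
      obtain ⟨y, rfl⟩ := smul_surj_aux (cB m hm) x
      refine ⟨m, hm, y, Or.inr ?_, rfl⟩
      have : m • (h y - c) = 0 := by rw [smul_sub, ← hxc]; simp
      have := sub_eq_zero.1 (smul_inj_aux (cC m hm) this)
      simpa [this] using hc
  · have hfz : ∀ a, h (f a) = 0 := fun a => (hex _).2 ⟨a, rfl⟩
    have mixed : ∀ m ∈ MM w, ∀ m' : ℤ, ∀ g, h g ∈ GC → ∀ a, m • g = m' • f a → False := by
      intro m hm m' g hg a he
      have := congrArg h he
      simp only [map_zsmul, hfz, smul_zero] at this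
      exact hGC.ne_zero hw hg (smul_inj_aux (cC m hm) this)
    rintro m hm m' hm' g (⟨a, ha, rfl⟩ | hg) g' (⟨a', ha', rfl⟩ | hg') he
    · have := hA.2 m hm m' hm' a ha a' ha' (hf (by simpa using he))
      exact ⟨this.1, by rw [this.2]⟩
    · exact (mixed m' hm' m g' hg' a he.symm).elim
    · exact (mixed m hm m' g hg a' he).elim
    · have := hGC.2 m hm m' hm' _ hg _ hg' (by simpa using congrArg h he)
      obtain ⟨rfl, -⟩ := this
      refine ⟨rfl, sub_eq_zero.1 (smul_inj_aux (cB m hm) ?_)⟩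
      rw [smul_sub, he, sub_self]

lemma splits_all {w : ℕ} (hw : 2 ≤ w) : ∀ (c : ℕ) (A : Type) [AddCommGroup A] [Finite A],
    Nat.card A = c →
    (∀ q : ℕ, q.Prime → q ∣ c → 2 * w - 1 ≤ q ∧ ∃ G, Splits' w (ZMod q) G) →
    ∃ G, Splits' w A G := by
  intro c
  induction c using Nat.strong_induction_on with
  | _ c ih =>
    intro A _ _ hc hq
    by_cases h1 : c = 1
    · subst h1
      have : Subsingleton A := (Nat.card_eq_one_iff_unique.1 hc).1
      exact ⟨∅, fun x hx => (hx (Subsingleton.elim _ _)).elim, by simp⟩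
    · obtain ⟨q, hqp, hqc⟩ := Nat.exists_prime_and_dvd h1
      haveI := Fact.mk hqp
      obtain ⟨x, hx⟩ := exists_prime_addOrderOf_dvd_card' (G := A) q (hc ▸ hqc)
      let H := AddSubgroup.zmultiples x
      have hH : Nat.card H = q := by rw [Nat.card_zmultiples, hx]
      have hcard : Nat.card A = Nat.card (A ⧸ H) * Nat.card H :=
        AddSubgroup.card_eq_card_quotient_mul_card_addSubgroup H
      have hpos : 0 < Nat.card (A ⧸ H) := Nat.card_pos
      have hdv : Nat.card (A ⧸ H) ∣ c := ⟨_, hc ▸ hcard⟩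
      obtain ⟨GC, hGC⟩ := ih (Nat.card (A ⧸ H)) (by
        rw [← hc, hcard, hH]; nlinarith [hqp.two_le]) (A ⧸ H) rfl
        (fun q' h' hd => hq q' h' (hd.trans hdv))
      let e : ZMod (Nat.card H) ≃+ H := zmodAddCyclicAddEquiv inferInstance
      obtain ⟨GA, hGA⟩ : ∃ G, Splits' w (ZMod (Nat.card H)) G := by
        rw [hH]; exact (hq q hqp hqc).2
      refine splits_ext hw (H.subtype.comp e.toAddMonoidHom) (QuotientAddGroup.mk' H) ?_ ?_ ?_ ?_ hGA hGC
      · exact H.subtype_injective.comp e.injective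
      · intro y
        rw [← AddMonoidHom.mem_ker, QuotientAddGroup.ker_mk']
        constructor
        · intro hy; exact ⟨e.symm ⟨y, hy⟩, by simp⟩
        · rintro ⟨a, rfl⟩; exact (e a).2
      · intro q' h' hd; exact (hq q' h' (hc ▸ hd)).1
      · intro q' h' hd; exact (hq q' h' (hd.trans hdv)).1

def SS {L : ℕ} (w : ℕ) (g : ZMod L) : Finset (ZMod L) :=
  (Finset.range w).image fun j : ℕ => (j : ZMod L) * g

lemma mem_dstar_SS {L w : ℕ} {g x : ZMod L} (hx : x ∈ dstar (SS w g)) :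
    ∃ m ∈ MM w, x = m • g := by
  simp only [dstar, SS, Finset.mem_erase, Finset.mem_image, Finset.mem_product, Finset.mem_range,
    Prod.exists] at hx
  obtain ⟨h0, a, b, ⟨⟨i, hi, rfl⟩, j, hj, rfl⟩, rfl⟩ := hx
  refine ⟨(i : ℤ) - j, ?_, ?_⟩
  · rw [mem_MM]
    refine ⟨?_, by omega, by omega⟩
    intro h
    have : i = j := by omega
    subst this
    simp at h0
  · simp [sub_mul]

lemma smul_mem_dstar {L w : ℕ} {g : ZMod L} {m : ℤ} (hm : m ∈ MM w) (h : m • g ≠ 0) :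
    m • g ∈ dstar (SS w g) := by
  rw [mem_MM] at hm
  simp only [dstar, SS, Finset.mem_erase, Finset.mem_image, Finset.mem_product, Finset.mem_range,
    Prod.exists]
  refine ⟨h, ?_⟩
  rcases le_or_gt 0 m with h0 | h0
  · refine ⟨_, _, ⟨⟨m.toNat, by omega, rfl⟩, 0, by omega, rfl⟩, ?_⟩
    have : ((m.toNat : ℤ) : ZMod L) = m := by rw [Int.toNat_of_nonneg h0]
    rw [Int.cast_natCast] at this
    rw [this]; simp
  · refine ⟨_, _, ⟨⟨0, by omega, rfl⟩, (-m).toNat, by omega, rfl⟩, ?_⟩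
    have : (((-m).toNat : ℤ) : ZMod L) = (-m : ℤ) := by rw [Int.toNat_of_nonneg (by omega)]
    rw [Int.cast_natCast] at this
    rw [this]; simp

lemma splits_prime {w q : ℕ} (hw : 2 ≤ w) (hq : q.Prime) (hd : 2 * w - 2 ∣ q - 1)
    (C : Finset (Finset (ZMod q))) (hC : IsCAC q w C) (hE : ∀ S ∈ C, IsEquiDiff w S)
    (hcard : C.card = (q - 1) / (2 * w - 2)) : ∃ G, Splits' w (ZMod q) G := by
  classical
  haveI := Fact.mk hq
  have hq2 := hq.two_le
  have hle : 2 * w - 2 ≤ q - 1 := Nat.le_of_dvd (by omega) hd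
  have hz : ∀ q' : ℕ, q'.Prime → q' ∣ Nat.card (ZMod q) → 2 * w - 1 ≤ q' := by
    intro q' h' hd'
    rw [Nat.card_zmod] at hd'
    rw [(Nat.prime_dvd_prime_iff_eq h' hq).1 hd']; omega
  have hinj : ∀ m : ℤ, m ≠ 0 → m.natAbs < 2 * w - 1 → ∀ x : ZMod q, m • x = 0 → x = 0 :=
    fun m h0 h1 x hx => smul_inj_aux (coprime_aux hz h0 h1) hx
  choose! γ hγ using hE
  have hγ' : ∀ S ∈ C, S = SS w (γ S) := hγ
  have hγ0 : ∀ S ∈ C, γ S ≠ 0 := by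
    intro S hS h0
    have h1 := hC.1 S hS
    have : S ⊆ {0} := by
      rw [hγ S hS, h0]
      intro x; simp only [mul_zero, Finset.mem_image, Finset.mem_singleton]
      rintro ⟨_, _, h⟩; exact h.symm
    have := Finset.card_le_card this
    simp at this
    omega
  have key : ∀ m ∈ MM w, ∀ m' ∈ MM w, ∀ S ∈ C, ∀ S' ∈ C, m • γ S = m' • γ S' → m = m' ∧ S = S' := by
    intro m hm m' hm' S hS S' hS' he
    have nz : ∀ m ∈ MM w, ∀ S ∈ C, m • γ S ≠ 0 := by
      intro m hm S hS h
      rw [mem_MM] at hm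
      exact hγ0 S hS (hinj m hm.1 (by omega) _ h)
    have a1 := smul_mem_dstar hm (nz m hm S hS)
    have a2 := smul_mem_dstar hm' (nz m' hm' S' hS')
    rw [← hγ' S hS] at a1
    rw [← hγ' S' hS', ← he] at a2
    have hSS : S = S' := by
      by_contra hne
      exact Finset.disjoint_left.1 (hC.2 S hS S' hS' hne) a1 a2
    subst hSS
    refine ⟨?_, rfl⟩
    by_contra hne
    rw [mem_MM] at hm hm'
    refine hγ0 S hS (hinj (m - m') (by omega) (by omega) _ ?_)
    rw [sub_smul, he, sub_self]
  refine ⟨γ '' C, ?_, ?_⟩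
  · have himg : (MM w ×ˢ C).image (fun z => z.1 • γ z.2) = Finset.univ.erase (0 : ZMod q) := by
      apply Finset.eq_of_subset_of_card_le
      · intro x hx
        simp only [Finset.mem_image, Finset.mem_product, Prod.exists] at hx
        obtain ⟨m, S, ⟨hm, hS⟩, rfl⟩ := hx
        simp only [Finset.mem_erase, Finset.mem_univ, and_true]
        intro h
        rw [mem_MM] at hm
        exact hγ0 S hS (hinj m hm.1 (by omega) _ h)
      · rw [Finset.card_image_of_injOn, Finset.card_product, card_MM hw, hcard,
          Nat.mul_div_cancel' hd, Finset.card_erase_of_mem (Finset.mem_univ _), Finset.card_univ,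
          ZMod.card]
        rintro ⟨m, S⟩ h ⟨m', S'⟩ h' he
        simp only [Finset.coe_product, Set.mem_prod, Finset.mem_coe] at h h'
        have := key m h.1 m' h'.1 S h.2 S' h'.2 he
        rw [this.1, this.2]
    intro x hx
    have : x ∈ Finset.univ.erase (0 : ZMod q) := by simpa using hx
    rw [← himg] at this
    simp only [Finset.mem_image, Finset.mem_product, Prod.exists] at this
    obtain ⟨m, S, ⟨hm, hS⟩, rfl⟩ := this
    exact ⟨m, hm, γ S, ⟨S, hS, rfl⟩, rfl⟩
  · rintro m hm m' hm' _ ⟨S, hS, rfl⟩ _ ⟨S', hS', rfl⟩ he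
    have := key m hm m' hm' S hS S' hS' he
    exact ⟨this.1, by rw [this.2]⟩

lemma cac_of_splits {w L : ℕ} (hw : 2 ≤ w) [NeZero L]
    (hL : ∀ q : ℕ, q.Prime → q ∣ L → 2 * w - 1 ≤ q)
    (G : Set (ZMod L)) (hG : Splits' w (ZMod L) G) :
    ∃ C : Finset (Finset (ZMod L)), IsCAC L w C ∧ C.card = (L - 1) / (2 * w - 2) := by
  classical
  have hL' : ∀ q : ℕ, q.Prime → q ∣ Nat.card (ZMod L) → 2 * w - 1 ≤ q := by
    rw [Nat.card_zmod]; exact hL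
  have hinj : ∀ m : ℤ, m ≠ 0 → m.natAbs < 2 * w - 1 → ∀ x : ZMod L, m • x = 0 → x = 0 :=
    fun m h0 h1 x hx => smul_inj_aux (coprime_aux hL' h0 h1) hx
  have hdis : ∀ g ∈ G, ∀ g' ∈ G, g ≠ g' → Disjoint (dstar (SS w g)) (dstar (SS w g')) := by
    intro g hg g' hg' hne
    rw [Finset.disjoint_left]
    intro x hx hx'
    obtain ⟨m, hm, rfl⟩ := mem_dstar_SS hx
    obtain ⟨m', hm', he⟩ := mem_dstar_SS hx'
    exact hne (hG.2 m hm m' hm' g hg g' hg' he).2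
  have hSinj : ∀ g ∈ G, ∀ g' ∈ G, SS w g = SS w g' → g = g' := by
    intro g hg g' hg' he
    by_contra hne
    have h1 := hdis g hg g' hg' hne
    rw [← he, Finset.disjoint_self_iff_empty] at h1
    have : (1 : ℤ) • g ∈ dstar (SS w g) :=
      smul_mem_dstar (by rw [mem_MM]; omega) (by simpa using hG.ne_zero hw hg)
    rw [h1] at this
    simp at this
  refine ⟨G.toFinset.image (SS w), ⟨?_, ?_⟩, ?_⟩
  · intro S hS
    simp only [Finset.mem_image, Set.mem_toFinset] at hS
    obtain ⟨g, hg, rfl⟩ := hS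
    rw [SS, Finset.card_image_of_injOn, Finset.card_range]
    intro i hi j hj he
    simp only [Finset.coe_range, Set.mem_Iio] at hi hj
    by_contra hne
    refine hG.ne_zero hw hg (hinj ((i : ℤ) - j) (by omega) (by omega) _ ?_)
    simpa [sub_mul, sub_eq_zero] using he
  · intro S hS S' hS' hne
    simp only [Finset.mem_image, Set.mem_toFinset] at hS hS'
    obtain ⟨g, hg, rfl⟩ := hS
    obtain ⟨g', hg', rfl⟩ := hS'
    exact hdis g hg g' hg' (by rintro rfl; exact hne rfl)
  · rw [Finset.card_image_of_injOn (by
      intro g hg g' hg' he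
      simp only [Set.coe_toFinset] at hg hg'
      exact hSinj g hg g' hg' he)]
    have himg : (MM w ×ˢ G.toFinset).image (fun z => z.1 • z.2) = Finset.univ.erase (0 : ZMod L) := by
      ext x
      simp only [Finset.mem_image, Finset.mem_product, Prod.exists, Set.mem_toFinset,
        Finset.mem_erase, Finset.mem_univ, and_true]
      constructor
      · rintro ⟨m, g, ⟨hm, hg⟩, rfl⟩ h
        rw [mem_MM] at hm
        exact hG.ne_zero hw hg (hinj m hm.1 (by omega) _ h)
      · intro hx
        obtain ⟨m, hm, g, hg, he⟩ := hG.1 x hx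
        exact ⟨m, g, ⟨hm, hg⟩, he.symm⟩
    have hc := congrArg Finset.card himg
    rw [Finset.card_image_of_injOn, Finset.card_product, card_MM hw,
      Finset.card_erase_of_mem (Finset.mem_univ _), Finset.card_univ, ZMod.card] at hc
    · rw [← hc, Nat.mul_div_cancel_left _ (by omega)]
    · rintro ⟨m, g⟩ h ⟨m', g'⟩ h' he
      simp only [Finset.coe_product, Set.mem_prod, Finset.mem_coe, Set.mem_toFinset] at h h'
      have := hG.2 m h.1 m' h'.1 g h.2 g' h'.2 he
      rw [this.1, this.2]

open Pointwise in
lemma dstar_card {w L : ℕ} (hw : 2 ≤ w) [NeZero L]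
    (hL : ∀ q : ℕ, q.Prime → q ∣ L → 2 * w - 1 ≤ q) (S : Finset (ZMod L)) (hS : S.card = w) :
    2 * w - 2 ≤ (dstar S).card := by
  classical
  have hne : S.Nonempty := Finset.card_pos.1 (by omega)
  have h1 := cauchy_davenport_minOrder_add hne hne.neg
  have h2 : ((2 * w - 1 : ℕ) : ℕ∞) ≤ AddMonoid.minOrder (ZMod L) := by
    rw [AddMonoid.le_minOrder]
    intro a ha hfin
    have hd : addOrderOf a ∣ L := by
      have := addOrderOf_dvd_natCard a
      rwa [Nat.card_zmod] at this
    have ho : addOrderOf a ≠ 1 := by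
      rwa [Ne, AddMonoid.addOrderOf_eq_one_iff]
    have := hL _ (Nat.minFac_prime ho) ((Nat.minFac_dvd _).trans hd)
    exact_mod_cast this.trans (Nat.minFac_le (addOrderOf_pos a))
  rw [Finset.card_neg, hS, show w + w - 1 = 2 * w - 1 by omega, min_eq_right h2] at h1
  have h3 : 2 * w - 1 ≤ (S + -S).card := by exact_mod_cast h1
  have h4 : S + -S = (S ×ˢ S).image fun p => p.1 - p.2 := by
    rw [← sub_eq_add_neg]; rfl
  rw [h4] at h3
  have := Finset.pred_card_le_card_erase (s := (S ×ˢ S).image fun p => p.1 - p.2) (a := 0)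
  unfold dstar
  omega

lemma cac_upper {w L : ℕ} (hw : 2 ≤ w) [NeZero L]
    (hL : ∀ q : ℕ, q.Prime → q ∣ L → 2 * w - 1 ≤ q) (C : Finset (Finset (ZMod L)))
    (hC : IsCAC L w C) : C.card ≤ (L - 1) / (2 * w - 2) := by
  classical
  rw [Nat.le_div_iff_mul_le (by omega)]
  have hsub : C.biUnion dstar ⊆ Finset.univ.erase (0 : ZMod L) := by
    intro x hx
    simp only [Finset.mem_biUnion] at hx
    obtain ⟨S, -, hx⟩ := hx
    simp only [Finset.mem_erase, Finset.mem_univ, and_true]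
    exact (Finset.mem_erase.1 hx).1
  have h1 := Finset.card_le_card hsub
  rw [Finset.card_biUnion (fun S hS S' hS' h => hC.2 S hS S' hS' h),
    Finset.card_erase_of_mem (Finset.mem_univ _), Finset.card_univ, ZMod.card] at h1
  refine le_trans ?_ h1
  rw [← smul_eq_mul]
  exact Finset.card_nsmul_le_sum _ _ _ fun S hS => dstar_card hw hL S (hC.1 S hS)

theorem stmt_6 (w n : ℕ) (hw : 2 ≤ w) (p : Fin n → ℕ) (hp : ∀ i, (p i).Prime)
    (hmono : StrictMono p) (hdvd : ∀ i, 2 * w - 2 ∣ p i - 1)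
    (hCAC : ∀ i, ∃ C : Finset (Finset (ZMod (p i))),
      IsCAC (p i) w C ∧ (∀ S ∈ C, IsEquiDiff w S) ∧ C.card = (p i - 1) / (2 * w - 2))
    (r : Fin n → ℕ) (hr : ∀ i, 0 < r i) :
    IsGreatest {k : ℕ | ∃ C : Finset (Finset (ZMod (∏ i, p i ^ r i))),
        IsCAC (∏ i, p i ^ r i) w C ∧ C.card = k}
      (((∏ i, p i ^ r i) - 1) / (2 * w - 2)) := by
  have hprod : (∏ i, p i ^ r i) ≠ 0 :=
    Finset.prod_ne_zero_iff.2 fun i _ => pow_ne_zero _ (hp i).ne_zero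
  haveI : NeZero (∏ i, p i ^ r i) := ⟨hprod⟩
  have hdiv : ∀ q : ℕ, q.Prime → q ∣ ∏ i, p i ^ r i → ∃ i, p i = q := by
    intro q hq hd
    obtain ⟨i, -, hi⟩ := (hq.prime.dvd_finsetProd_iff _).1 hd
    exact ⟨i, ((Nat.prime_dvd_prime_iff_eq hq (hp i)).1 (hq.dvd_of_dvd_pow hi)).symm⟩
  have hbig : ∀ q : ℕ, q.Prime → q ∣ ∏ i, p i ^ r i → 2 * w - 1 ≤ q := by
    intro q hq hd
    obtain ⟨i, rfl⟩ := hdiv q hq hd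
    have h2 := hq.two_le
    have := Nat.le_of_dvd (by omega) (hdvd i)
    omega
  constructor
  · obtain ⟨G, hG⟩ := splits_all hw _ (ZMod (∏ i, p i ^ r i)) (Nat.card_zmod _) (by
      intro q hq hd
      refine ⟨hbig q hq hd, ?_⟩
      obtain ⟨i, rfl⟩ := hdiv q hq hd
      obtain ⟨C, h1, h2, h3⟩ := hCAC i
      exact splits_prime hw hq (hdvd i) C h1 h2 h3)
    exact cac_of_splits hw hbig G hG
  · rintro k ⟨C, hC, rfl⟩
    exact cac_upper hw hbig C hC
end

section
/- Let L' and w be positive integers with w ≥ 2. If every prime factor of L' is at least 2w - 1, then every MC-CAC of length (w-1)L' and weight w in 2 channels has at most L' + ⌊(L' + w - 3)/(w - 1)⌋ codewords. -/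
open Finset Pointwise in
lemma dyson_reduce {G : Type*} [AddCommGroup G] [DecidableEq G] (n : ℕ) :
    ∀ A B : Finset G, B.card ≤ n → A.Nonempty → B.Nonempty →
    ∃ A' B' : Finset G, A'.Nonempty ∧ B'.Nonempty ∧ A'.card + B'.card = A.card + B.card ∧
      A'.card ≤ (A + B).card ∧ B' ⊆ B ∧
      ∀ a ∈ A', ∀ b ∈ B', ∀ c ∈ B', a + (b - c) ∈ A' := by
  induction n with
  | zero =>
    intro A B h _ hB
    have := hB.card_pos
    omega
  | succ n ih =>
    intro A B h hA hB
    by_cases hst : ∀ a ∈ A, ∀ b ∈ B, ∀ c ∈ B, a + (b - c) ∈ A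
    · exact ⟨A, B, hA, hB, rfl, card_le_card_add_right hB, Subset.rfl, hst⟩
    · push Not at hst
      obtain ⟨a, ha, b, hb, c, hc, hn⟩ := hst
      have h1 := addDysonETransform.subset (a - c) (A, B)
      have h2 := addDysonETransform.card (a - c) (A, B)
      have e1 : (addDysonETransform (a - c) (A, B)).1 = A ∪ ((a - c) +ᵥ B) := rfl
      have e2 : (addDysonETransform (a - c) (A, B)).2 = B ∩ (-(a - c) +ᵥ A) := rfl
      rw [e1, e2] at h1 h2
      simp only at h1 h2
      have hlt : (B ∩ (-(a - c) +ᵥ A)).card < B.card := by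
        apply card_lt_card
        refine ⟨inter_subset_left, fun hs => hn ?_⟩
        have := hs hb
        rw [mem_inter, mem_vadd_finset] at this
        obtain ⟨_, y, hy, hyb⟩ := this
        have : y = a + (b - c) := by
          rw [← hyb, vadd_eq_add]; abel
        rwa [← this]
      obtain ⟨A', B', h3, h4, h5, h6, h7, h8⟩ := ih (A ∪ ((a - c) +ᵥ B)) (B ∩ (-(a - c) +ᵥ A))
        (by omega) (hA.mono subset_union_left)
        ⟨c, mem_inter.2 ⟨hc, mem_vadd_finset.2 ⟨a, ha, by rw [vadd_eq_add]; abel⟩⟩⟩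
      exact ⟨A', B', h3, h4, h5.trans h2, h6.trans (card_le_card h1), h7.trans inter_subset_left, h8⟩

open Finset in
lemma card_dvd_of_stable {G : Type*} [AddCommGroup G] [DecidableEq G] [Finite G]
    (H : AddSubgroup G) (A : Finset G) (hA : ∀ a ∈ A, ∀ h ∈ H, a + h ∈ A) :
    Nat.card H ∣ A.card := by
  classical
  rw [card_eq_sum_card_image (fun x : G => (x : G ⧸ H)) A]
  apply dvd_sum
  intro q hq
  obtain ⟨a, ha, rfl⟩ := mem_image.1 hq
  have : Nat.card H = (A.filter fun x : G => (x : G ⧸ H) = (a : G ⧸ H)).card := by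
    have := Fintype.ofFinite G
    rw [Nat.card_eq_fintype_card, ← Finset.card_univ]
    apply card_bij (fun (h : H) _ => a + (h : G))
    · intro h _
      simp only [mem_filter]
      exact ⟨hA a ha h h.2, by rw [eq_comm, QuotientAddGroup.eq]; simp⟩
    · intro x _ y _ hxy
      exact Subtype.ext (add_left_cancel hxy)
    · intro b hb
      rw [mem_filter, eq_comm, QuotientAddGroup.eq] at hb
      exact ⟨⟨-a + b, hb.2⟩, mem_univ _, by simp⟩
  rw [this]

open Finset Pointwise in
lemma core {G : Type*} [AddCommGroup G] [DecidableEq G] [Finite G]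
    (A B : Finset G) (hA : A.Nonempty) (hB : B.Nonempty) :
    ∃ (H : AddSubgroup G) (n : ℕ) (B' : Finset G), B'.Nonempty ∧ n + B'.card = A.card + B.card ∧
      0 < n ∧ n ≤ (A + B).card ∧ B' ⊆ B ∧ Nat.card H ∣ n ∧ (∀ b ∈ B', ∀ c ∈ B', b - c ∈ H) ∧
      B'.card ≤ Nat.card H := by
  obtain ⟨A', B', h3, h4, h5, h6, h7, h8⟩ := dyson_reduce B.card A B le_rfl hA hB
  let H := AddSubgroup.closure {x : G | ∃ b ∈ B', ∃ c ∈ B', b - c = x}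
  have hH : ∀ b ∈ B', ∀ c ∈ B', b - c ∈ H := fun b hb c hc =>
    AddSubgroup.subset_closure ⟨b, hb, c, hc, rfl⟩
  refine ⟨H, A'.card, B', h4, h5, h3.card_pos, h6, h7, ?_, hH, ?_⟩
  · apply card_dvd_of_stable
    intro a ha h hh
    induction hh using AddSubgroup.closure_induction generalizing a with
    | mem x hx => obtain ⟨b, hb, c, hc, rfl⟩ := hx; exact h8 a ha b hb c hc
    | zero => simpa
    | add x y _ _ hx hy => rw [← add_assoc]; exact hy _ (hx _ ha)
    | neg x _ hx =>
      have hinj : A'.image (· + x) = A' := by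
        apply eq_of_subset_of_card_le
        · intro z hz
          obtain ⟨y, hy, rfl⟩ := mem_image.1 hz
          exact hx y hy
        · rw [card_image_of_injective _ (add_left_injective x)]
      rw [← hinj] at ha
      obtain ⟨y, hy, rfl⟩ := mem_image.1 ha
      simpa using hy
  · obtain ⟨c, hc⟩ := h4
    classical
    have := Fintype.ofFinite G
    rw [Nat.card_eq_fintype_card, ← Finset.card_univ, ← Finset.card_attach]
    apply card_le_card_of_injOn (fun b => (⟨b.1 - c, hH b.1 b.2 c hc⟩ : H)) (by simp)
    intro x _ y _ hxy
    have h9 := congrArg (fun z : H => (z : G)) hxy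
    exact Subtype.ext (sub_left_injective h9)

lemma order_cases (L' k h : ℕ) (hprime : ∀ p : ℕ, p.Prime → p ∣ L' → 2 * k + 1 ≤ p)
    (hh : h ∣ k * L') (h0 : 0 < h) : h ∣ k ∨ 2 * k + 1 ≤ h := by
  by_cases hc : h.Coprime L'
  · exact Or.inl (hc.dvd_of_dvd_mul_right hh)
  · right
    obtain ⟨p, hp, h1, h2⟩ := Nat.Prime.not_coprime_iff_dvd.1 hc
    exact (hprime p hp h2).trans (Nat.le_of_dvd h0 h1)

open Finset Pointwise in
lemma mixed_bound (L' k : ℕ) (hL' : 0 < L') (hk : 0 < k)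
    (hprime : ∀ p : ℕ, p.Prime → p ∣ L' → 2 * k + 1 ≤ p)
    (A B : Finset (ZMod (k * L'))) (hA : A.Nonempty) (hB : B.Nonempty)
    (hAB : A.card + B.card = k + 1) : k ≤ (A + B).card := by
  have : NeZero (k * L') := ⟨by positivity⟩
  obtain ⟨H, n, B', h1, h2, h0, h3, h4, h5, h6, h7⟩ := core A B hA hB
  have hd : Nat.card H ∣ k * L' := by simpa using H.card_addSubgroup_dvd_card
  rcases order_cases L' k _ hprime hd Nat.card_pos with h | h
  · have : k < n + Nat.card H := by omega
    obtain ⟨x, hx⟩ := h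
    obtain ⟨y, hy⟩ := h5
    have h8 : Nat.card H * x < Nat.card H * (y + 1) := by rw [mul_add, ← hx, ← hy]; omega
    have h9 : x ≤ y := Nat.lt_succ_iff.1 (Nat.lt_of_mul_lt_mul_left h8)
    have := Nat.mul_le_mul_left (Nat.card H) h9
    omega
  · have := Nat.le_of_dvd h0 h5
    omega

open Finset Pointwise in
lemma pure_bound (L' k : ℕ) (hL' : 0 < L') (hk : 0 < k)
    (hprime : ∀ p : ℕ, p.Prime → p ∣ L' → 2 * k + 1 ≤ p)
    (A : Finset (ZMod (k * L'))) (hA : A.Nonempty) (hAk : A.card ≤ k + 1) :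
    2 * A.card ≤ (A - A).card + ((A - A).filter fun x => k • x = 0).card := by
  have : NeZero (k * L') := ⟨by positivity⟩
  obtain ⟨H, n, B', h1, h2, h0, h3, h4, h5, h6, h7⟩ := core A (-A) hA hA.neg
  rw [← sub_eq_add_neg, ] at h3
  rw [card_neg] at h2
  obtain ⟨c, hc⟩ := h1
  have hsub : ∀ b ∈ B', c - b ∈ A - A := by
    intro b hb
    have h8 := h4 hb
    have h9 := h4 hc
    rw [mem_neg'] at h8 h9
    have := sub_mem_sub h8 h9
    simpa [add_comm, sub_eq_add_neg] using this
  have hd : Nat.card H ∣ k * L' := by simpa using H.card_addSubgroup_dvd_card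
  rcases order_cases L' k _ hprime hd Nat.card_pos with h | h
  · have : B'.card ≤ ((A - A).filter fun x => k • x = 0).card := by
      apply card_le_card_of_injOn (fun b => c - b)
      · intro b hb
        simp only [coe_filter, Set.mem_ofPred_eq]
        refine ⟨hsub b hb, ?_⟩
        obtain ⟨x, hx⟩ := h
        have hz : Nat.card H • (c - b) = 0 := by
          have := card_nsmul_eq_zero' (x := (⟨c - b, h6 c hc b hb⟩ : H))
          simpa only [AddSubgroup.coe_nsmul, AddSubgroup.coe_zero] using congrArg (fun z : H => (z : ZMod (k * L'))) this
        exact addOrderOf_dvd_iff_nsmul_eq_zero.1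
          ((addOrderOf_dvd_iff_nsmul_eq_zero.2 hz).trans ⟨x, hx⟩)
      · intro x _ y _ hxy
        simpa using hxy
    omega
  · have := Nat.le_of_dvd h0 h5
    have : 0 < ((A - A).filter fun x => k • x = 0).card :=
      card_pos.2 ⟨0, by simpa using hsub c hc⟩
    omega

open Finset Pointwise in
lemma diag_bound (L' k : ℕ) (hL' : 0 < L') (hk : 0 < k)
    (hprime : ∀ p : ℕ, p.Prime → p ∣ L' → 2 * k + 1 ≤ p)
    (S : Finset (Fin 2 × ZMod (k * L'))) (i : Fin 2)
    (hAk : (chan S i).card ≤ k + 1) (hne : (chan S i).Nonempty) :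
    2 * (chan S i).card ≤ (Darr S i i).card +
      ((Darr S i i).filter fun x => k • x = 0).card + 2 := by
  have h := pure_bound L' k hL' hk hprime (chan S i) hne hAk
  have e : Darr S i i = (chan S i - chan S i).erase 0 := by
    simp [Darr]; rfl
  have h0 : (0 : ZMod (k * L')) ∈ chan S i - chan S i := by
    obtain ⟨c, hc⟩ := hne
    simpa using sub_mem_sub hc hc
  rw [e, filter_erase, card_erase_of_mem h0, card_erase_of_mem (by simp [h0])]
  omega

open Finset Pointwise in
lemma off_bound (L' k : ℕ) (hL' : 0 < L') (hk : 0 < k)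
    (hprime : ∀ p : ℕ, p.Prime → p ∣ L' → 2 * k + 1 ≤ p)
    (S : Finset (Fin 2 × ZMod (k * L')))
    (h0 : (chan S 0).Nonempty) (h1 : (chan S 1).Nonempty)
    (hw : (chan S 0).card + (chan S 1).card = k + 1) :
    k ≤ (Darr S 0 1).card := by
  have e : Darr S 0 1 = chan S 0 + (- chan S 1) := by
    rw [← sub_eq_add_neg]
    simp [Darr]; rfl
  rw [e]
  exact mixed_bound L' k hL' hk hprime _ _ h0 h1.neg (by simpa)

open Finset in
lemma chan_card {L : ℕ} (S : Finset (Fin 2 × ZMod L)) :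
    (chan S 0).card + (chan S 1).card = S.card := by
  have h : ∀ i, (chan S i).card = (S.filter fun p => p.1 = i).card := by
    intro i
    apply card_image_of_injOn
    intro x hx y hy hxy
    simp only [coe_filter, Set.mem_ofPred_eq] at hx hy
    exact Prod.ext (hx.2.trans hy.2.symm) hxy
  rw [h, h, card_eq_sum_card_fiberwise (s := S) (f := Prod.fst) (t := univ) (by simp), Fin.sum_univ_two]

open Finset in
lemma sum_bound {α β : Type*} [DecidableEq β] (C : Finset α) (f : α → Finset β) (T : Finset β)
    (hd : ∀ x ∈ C, ∀ y ∈ C, x ≠ y → Disjoint (f x) (f y)) (hT : ∀ x ∈ C, f x ⊆ T) :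
    ∑ x ∈ C, (f x).card ≤ T.card := by
  rw [← card_biUnion hd]
  exact card_le_card (biUnion_subset.2 hT)

open Finset in
theorem stmt_aux (L' k : ℕ) (hL' : 0 < L') (hk : 0 < k)
    (hprime : ∀ p : ℕ, p.Prime → p ∣ L' → 2 * k + 1 ≤ p)
    (C : Finset (Finset (Fin 2 × ZMod (k * L'))))
    (hC : IsMCCAC 2 (k * L') (k + 1) C) :
    C.card ≤ L' + (L' + k - 2) / k := by
  have : NeZero (k * L') := ⟨by positivity⟩
  obtain ⟨hcard, hdis⟩ := hC
  have hdiag0 : ∀ S : Finset (Fin 2 × ZMod (k * L')), ∀ i, Darr S i i ⊆ univ.erase 0 := by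
    intro S i x hx
    simp only [Darr, if_true, mem_erase] at hx
    simp [hx.1]
  have hf : ∀ i, ∑ S ∈ C, (Darr S i i).card ≤ k * L' - 1 := by
    intro i
    refine (sum_bound C (fun S => Darr S i i) (univ.erase 0)
      (fun S hS S' hS' h => hdis S hS S' hS' h i i) (fun S _ => hdiag0 S i)).trans ?_
    simp [ZMod.card]
  have hg : ∀ i, ∑ S ∈ C, ((Darr S i i).filter fun x => k • x = 0).card ≤ k - 1 := by
    intro i
    refine (sum_bound C (fun S => (Darr S i i).filter fun x => k • x = 0)
      ((univ.filter fun x => k • x = 0).erase 0)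
      (fun S hS S' hS' h => disjoint_filter_filter (hdis S hS S' hS' h i i)) (fun S _ => ?_)).trans ?_
    · rw [← filter_erase]
      exact filter_subset_filter _ (hdiag0 S i)
    · rw [card_erase_of_mem (by simp)]
      have := IsAddCyclic.card_nsmul_eq_zero_le (α := ZMod (k * L')) hk
      omega
  have he : ∑ S ∈ C, (Darr S 0 1).card ≤ k * L' := by
    refine (sum_bound C (fun S => Darr S 0 1) univ
      (fun S hS S' hS' h => hdis S hS S' hS' h 0 1) (fun S _ => subset_univ _)).trans ?_
    simp [ZMod.card]
  classical
  let m : Finset (Fin 2 × ZMod (k * L')) → ℕ := fun S =>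
    if (chan S 0).Nonempty ∧ (chan S 1).Nonempty then 1 else 0
  have hm : ∑ S ∈ C, m S ≤ L' := by
    have : k * ∑ S ∈ C, m S ≤ k * L' := by
      refine le_trans ?_ he
      rw [mul_sum]
      refine sum_le_sum fun S hS => ?_
      simp only [m]
      split_ifs with h
      · rw [mul_one]
        exact off_bound L' k hL' hk hprime S h.1 h.2 ((chan_card S).trans (hcard S hS))
      · simp
    exact Nat.le_of_mul_le_mul_left this hk
  have key : ∑ S ∈ C, 2 * (k + 1) ≤ ∑ S ∈ C, ((Darr S 0 0).card
      + ((Darr S 0 0).filter fun x => k • x = 0).card + ((Darr S 1 1).card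
      + ((Darr S 1 1).filter fun x => k • x = 0).card) + 2 + 2 * m S) := by
    refine sum_le_sum fun S hS => ?_
    have hcc := (chan_card S).trans (hcard S hS)
    have d0 := diag_bound L' k hL' hk hprime S 0 (by omega)
    have d1 := diag_bound L' k hL' hk hprime S 1 (by omega)
    simp only [m]
    rcases (chan S 0).eq_empty_or_nonempty with h0 | h0 <;>
    rcases (chan S 1).eq_empty_or_nonempty with h1 | h1
    · simp [h0, h1] at hcc
    · have := d1 h1
      simp only [h0, card_empty] at hcc
      omega
    · have := d0 h0
      simp only [h1, card_empty] at hcc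
      omega
    · have := d0 h0
      have := d1 h1
      rw [if_pos ⟨h0, h1⟩]
      omega
  simp only [sum_add_distrib, ← mul_sum, sum_const, smul_eq_mul] at key
  have := hf 0
  have := hf 1
  have := hg 0
  have := hg 1
  have hpos : 0 < k * L' := by positivity
  have hfin : C.card * k ≤ (L' + k - 2) + k * L' := by
    have e : C.card * (2 * (k + 1)) = 2 * (C.card * k) + C.card * 2 := by ring
    omega
  rw [add_comm, ← Nat.add_mul_div_left _ _ hk]
  exact (Nat.le_div_iff_mul_le hk).2 hfin

theorem stmt_8 (L' w : ℕ) (hL' : 0 < L') (hw : 2 ≤ w)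
    (hprime : ∀ p : ℕ, p.Prime → p ∣ L' → 2 * w - 1 ≤ p)
    (C : Finset (Finset (Fin 2 × ZMod ((w - 1) * L'))))
    (hC : IsMCCAC 2 ((w - 1) * L') w C) :
    C.card ≤ L' + (L' + w - 3) / (w - 1) := by
  obtain ⟨k, rfl⟩ : ∃ k, w = k + 1 := ⟨w - 1, by omega⟩
  have e : L' + (k + 1) - 3 = L' + k - 2 := by omega
  rw [e]
  exact stmt_aux L' k hL' (by omega) (fun p hp h => by have := hprime p hp h; omega) C hC
end
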